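/- arXiv:2412.20874 — 2 statements merged into one kernel-verified Lean document; each statement's English description precedes it below -/
import Mathlib

section
/- Let G be a graph and C a circuit in G such that every edge of C is contained in a thread of G of length at least q. If G admits a Z2×Z2-flow f, then G admits a Z2×Z2-flow g such that supp(f) − E(C) = supp(g) − E(C) and |E_{g=(0,0)}(C)| ≤ (1/4)(|E(C)| − q). -/
/-- A finite multigraph: loops and multiple edges are allowed.  Each edge is
assigned its (unordered) pair of endpoints. -/
structure Multigraph where
  V : Type
  E : Type
  finV : Finite V
  finE : Finite E
  ends : E → Sym2 V

attribute [instance] Multigraph.finV Multigraph.finE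

namespace Multigraph

/-- A walk of length `n`: a sequence of `n+1` vertices and `n` edges, each edge
joining consecutive vertices. -/
structure Walk (G : Multigraph) (n : ℕ) where
  vtx : Fin (n + 1) → G.V
  edge : Fin n → G.E
  compat : ∀ i : Fin n, G.ends (edge i) = s(vtx i.castSucc, vtx i.succ)

variable (G : Multigraph)

/-- The degree of a vertex (a loop counts twice). -/
noncomputable def degree (v : G.V) : ℕ :=
  Nat.card {e : G.E // v ∈ G.ends e ∧ ¬ (G.ends e).IsDiag} +
    2 * Nat.card {e : G.E // G.ends e = s(v, v)}

/-- The degree of a vertex in the subgraph with edge set `S` (a loop counts twice). -/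
noncomputable def degIn (S : Set G.E) (v : G.V) : ℕ :=
  Nat.card {e : G.E // e ∈ S ∧ v ∈ G.ends e ∧ ¬ (G.ends e).IsDiag} +
    2 * Nat.card {e : G.E // e ∈ S ∧ G.ends e = s(v, v)}

/-- A cycle (identified with its edge set): every vertex has even degree. -/
def IsCycle (S : Set G.E) : Prop := ∀ v : G.V, Even (G.degIn S v)

/-- `u` is joined to `w` by a path using only edges in `S`. -/
def Reaches (S : Set G.E) (u w : G.V) : Prop :=
  Relation.ReflTransGen (fun a b => ∃ e ∈ S, G.ends e = s(a, b)) u w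

/-- A circuit (identified with its edge set): a connected `2`-regular subgraph. -/
def IsCircuit (S : Set G.E) : Prop :=
  S.Nonempty ∧
    (∀ v : G.V, (∃ e ∈ S, v ∈ G.ends e) → G.degIn S v = 2) ∧
    ∀ u w : G.V, (∃ e ∈ S, u ∈ G.ends e) → (∃ e ∈ S, w ∈ G.ends e) → G.Reaches S u w

/-- A `ℤ₂×ℤ₂`-flow: at every vertex the values on the incident edges sum to zero
(a loop contributes its value twice, hence zero). -/
def IsFlow (f : G.E → ZMod 2 × ZMod 2) : Prop :=
  ∀ v : G.V, ∑ᶠ e ∈ {e : G.E | v ∈ G.ends e ∧ ¬ (G.ends e).IsDiag}, f e = 0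

/-- The support of a flow. -/
def supp (f : G.E → ZMod 2 × ZMod 2) : Set G.E := {e | f e ≠ 0}

/-- Contraction of the edge set `C`: delete the edges of `C` and identify the
ends of each edge of `C`. -/
def contract (C : Set G.E) : Multigraph where
  V := Quot fun u w : G.V => ∃ e ∈ C, G.ends e = s(u, w)
  E := {e : G.E // e ∉ C}
  finV := Finite.of_surjective _ (Quot.mk_surjective)
  finE := inferInstance
  ends := fun e => (G.ends e.1).map (Quot.mk _)

/-- A path: all vertices distinct (hence all edges distinct, which we also require). -/
def Walk.IsPath {n : ℕ} (W : G.Walk n) : Prop :=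
  Function.Injective W.vtx ∧ Function.Injective W.edge

/-- A nontrivial path all of whose internal vertices have degree `2` in `G`. -/
def IsDeg2Path {n : ℕ} (W : G.Walk n) : Prop :=
  1 ≤ n ∧ W.IsPath G ∧ ∀ i : Fin (n + 1), 0 < i.val → i.val < n → G.degree (W.vtx i) = 2

/-- A thread of `G`: a maximal path all of whose internal vertices have degree `2`
in `G` (maximal: its edge set is not properly contained in the edge set of
another such path). -/
def IsThread {n : ℕ} (W : G.Walk n) : Prop :=
  G.IsDeg2Path W ∧ ∀ (m : ℕ) (Q : G.Walk m), G.IsDeg2Path Q →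
    Set.range W.edge ⊆ Set.range Q.edge → Set.range Q.edge = Set.range W.edge

/-- A cycle cover: a (multi)collection of cycles covering every edge. -/
def IsCycleCover (𝒞 : Multiset (Set G.E)) : Prop :=
  (∀ S ∈ 𝒞, G.IsCycle S) ∧ ∀ e : G.E, ∃ S ∈ 𝒞, e ∈ S

/-- The length of a cycle cover: the sum of the lengths of its cycles. -/
noncomputable def coverLength (𝒞 : Multiset (Set G.E)) : ℕ :=
  (𝒞.map Set.ncard).sum

/-- The minimum length of a cycle cover of `G`. -/
noncomputable def cc : ℕ :=
  sInf {L : ℕ | ∃ 𝒞 : Multiset (Set G.E), G.IsCycleCover 𝒞 ∧ G.coverLength 𝒞 = L}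

/-- `G` is bridgeless: the ends of each edge `e` are still joined after deleting `e`. -/
def Bridgeless : Prop :=
  ∀ (e : G.E) (u w : G.V), G.ends e = s(u, w) → G.Reaches {e}ᶜ u w

/-- The connected component of the subgraph with edge set `S` containing the edge `e₀`. -/
def component (S : Set G.E) (e₀ : G.E) : Set G.E :=
  {e ∈ S | ∃ u w : G.V, u ∈ G.ends e₀ ∧ w ∈ G.ends e ∧ G.Reaches S u w}

/-- `B` is a connected component of the subgraph with edge set `S`. -/
def IsComponent (S B : Set G.E) : Prop := ∃ e₀ ∈ S, B = G.component S e₀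

/-- A `k`-flow: an orientation `D` (given by the tail/head pair of each edge)
together with an integer-valued function `f` with `|f e| < k`, conserved at
every vertex. -/
def IsIntFlow (k : ℕ) (D : G.E → G.V × G.V) (f : G.E → ℤ) : Prop :=
  (∀ e : G.E, s((D e).1, (D e).2) = G.ends e) ∧
    (∀ e : G.E, |f e| < (k : ℤ)) ∧
    ∀ v : G.V, (∑ᶠ e ∈ {e : G.E | (D e).1 = v}, f e) =
      ∑ᶠ e ∈ {e : G.E | (D e).2 = v}, f e

end Multigraph

namespace Multigraph

variable {G : Multigraph}

noncomputable instance : Fintype G.E := Fintype.ofFinite _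

noncomputable instance : Fintype G.V := Fintype.ofFinite _

open Classical in
/-- The incidence number of a vertex and an edge modulo `2`. -/
noncomputable def inc (G : Multigraph) (v : G.V) (e : G.E) : ZMod 2 :=
  if v ∈ G.ends e ∧ ¬ (G.ends e).IsDiag then 1 else 0

open Classical in
theorem inc_eq {e : G.E} {a b : G.V} (h : G.ends e = s(a, b)) (v : G.V) :
    G.inc v e = (if v = a then 1 else 0) + (if v = b then 1 else 0) := by
  unfold inc
  rw [h]
  simp only [Sym2.mem_iff, Sym2.mk_isDiag_iff]
  by_cases h1 : v = a <;> by_cases h2 : v = b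
  · subst h1
    subst h2
    simpa using (by decide : (0 : ZMod 2) = 1 + 1)
  · subst h1
    simp [h2]
  · subst h2
    simp [h1, Ne.symm h1]
  · simp [h1, h2]

theorem inc_eq_zero {e : G.E} {v : G.V} (h : v ∉ G.ends e) : G.inc v e = 0 := by
  simp [inc, h]

theorem isFlow_iff {f : G.E → ZMod 2 × ZMod 2} :
    G.IsFlow f ↔ ∀ v, ∑ e, G.inc v e • f e = 0 := by
  classical
  refine forall_congr' fun v => ?_
  rw [finsum_mem_eq_finite_toFinset_sum _ (Set.toFinite _)]
  simp only [inc, ite_smul, one_smul, zero_smul]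
  rw [← Finset.sum_filter]
  have : (Set.toFinite {e : G.E | v ∈ G.ends e ∧ ¬ (G.ends e).IsDiag}).toFinset =
      Finset.univ.filter fun e => v ∈ G.ends e ∧ ¬ (G.ends e).IsDiag := by
    ext e
    simp
  rw [this]

/-- The value of the linear functional with coefficients `l` at `x`. -/
def dot (l x : ZMod 2 × ZMod 2) : ZMod 2 := l.1 * x.1 + l.2 * x.2

theorem dot_add (l x y : ZMod 2 × ZMod 2) : dot l (x + y) = dot l x + dot l y := by
  simp only [dot, Prod.fst_add, Prod.snd_add]
  ring

theorem dot_smul (l x : ZMod 2 × ZMod 2) (t : ZMod 2) : dot l (t • x) = t * dot l x := by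
  simp only [dot, Prod.smul_fst, Prod.smul_snd, smul_eq_mul]
  ring

theorem IsFlow.sum_inc_mul_dot {f : G.E → ZMod 2 × ZMod 2} (hf : G.IsFlow f)
    (l : ZMod 2 × ZMod 2) (v : G.V) : ∑ e, G.inc v e * dot l (f e) = 0 := by
  have h := congrArg (dot l) (isFlow_iff.1 hf v)
  have h0 : dot l 0 = 0 := by simp [dot]
  have key : ∀ s : Finset G.E,
      dot l (∑ e ∈ s, G.inc v e • f e) = ∑ e ∈ s, G.inc v e * dot l (f e) := by
    classical
    intro s
    induction s using Finset.induction_on with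
    | empty => simpa using h0
    | insert a s ha ih => rw [Finset.sum_insert ha, Finset.sum_insert ha, dot_add, dot_smul, ih]
  rw [← key, h, h0]

theorem IsFlow.add_smul {f : G.E → ZMod 2 × ZMod 2} (hf : G.IsFlow f) {t : G.E → ZMod 2}
    (ht : ∀ v, ∑ e, G.inc v e * t e = 0) (c : ZMod 2 × ZMod 2) :
    G.IsFlow fun e => f e + t e • c := by
  rw [isFlow_iff] at hf ⊢
  intro v
  simp only [smul_add, Finset.sum_add_distrib, hf v, zero_add, smul_smul, ← Finset.sum_smul, ht v,
    zero_smul]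

/-- A cyclic enumeration of the vertices and the edges of a circuit. -/
structure IsCyclicOrder (C : Set G.E) (n : ℕ) (v : ℕ → G.V) (e : ℕ → G.E) : Prop where
  ends : ∀ i < n, G.ends (e i) = s(v i, v (i + 1))
  closed : v n = v 0
  vtx_inj : ∀ i < n, ∀ j < n, v i = v j → i = j
  edge_inj : ∀ i < n, ∀ j < n, e i = e j → i = j
  mem_iff : ∀ x, x ∈ C ↔ ∃ i < n, e i = x

section Circuit

variable {C : Set G.E}

theorem IsCircuit.exists_pair (hC : G.IsCircuit C) (hloop : ∀ e ∈ C, ¬ (G.ends e).IsDiag) {x : G.V}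
    (hx : ∃ e ∈ C, x ∈ G.ends e) :
    ∃ e₁ e₂, e₁ ≠ e₂ ∧ ∀ e, e ∈ C ∧ x ∈ G.ends e ↔ e = e₁ ∨ e = e₂ := by
  have h := hC.2.1 x hx
  have h0 : Nat.card {e : G.E // e ∈ C ∧ G.ends e = s(x, x)} = 0 := by
    rw [Nat.card_eq_zero]
    left
    refine ⟨fun e => hloop e.1 e.2.1 ?_⟩
    rw [e.2.2]
    simp
  rw [degIn, h0, mul_zero, add_zero, Nat.card_eq_two_iff] at h
  obtain ⟨a, b, hab, hu⟩ := h
  refine ⟨a.1, b.1, fun h => hab (Subtype.ext h), fun e => ⟨fun he => ?_, ?_⟩⟩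
  · have : (⟨e, he.1, he.2, hloop e he.1⟩ : {e : G.E // e ∈ C ∧ x ∈ G.ends e ∧
        ¬ (G.ends e).IsDiag}) ∈ ({a, b} : Set _) := hu ▸ Set.mem_univ _
    rcases this with h | h
    · exact Or.inl (congrArg Subtype.val h)
    · exact Or.inr (congrArg Subtype.val h)
  · rintro (rfl | rfl)
    · exact ⟨a.2.1, a.2.2.1⟩
    · exact ⟨b.2.1, b.2.2.1⟩

theorem IsCircuit.eq_or_eq (hC : G.IsCircuit C) (hloop : ∀ e ∈ C, ¬ (G.ends e).IsDiag) {x : G.V}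
    {e₁ e₂ e₃ : G.E} (h₁ : e₁ ∈ C) (h₂ : e₂ ∈ C) (h₃ : e₃ ∈ C) (hx₁ : x ∈ G.ends e₁)
    (hx₂ : x ∈ G.ends e₂) (hx₃ : x ∈ G.ends e₃) (hne : e₁ ≠ e₂) : e₃ = e₁ ∨ e₃ = e₂ := by
  obtain ⟨a, b, -, h⟩ := hC.exists_pair hloop ⟨e₁, h₁, hx₁⟩
  rcases (h e₁).1 ⟨h₁, hx₁⟩ with rfl | rfl <;> rcases (h e₂).1 ⟨h₂, hx₂⟩ with rfl | rfl <;>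
    rcases (h e₃).1 ⟨h₃, hx₃⟩ with rfl | rfl <;> simp_all

theorem IsCircuit.exists_step (hC : G.IsCircuit C) (hloop : ∀ e ∈ C, ¬ (G.ends e).IsDiag)
    (d : {d : G.V × G.E // d.2 ∈ C ∧ d.1 ∈ G.ends d.2}) :
    ∃ d' : {d : G.V × G.E // d.2 ∈ C ∧ d.1 ∈ G.ends d.2},
      G.ends d.1.2 = s(d.1.1, d'.1.1) ∧ d'.1.2 ≠ d.1.2 := by
  obtain ⟨⟨x, e⟩, he, hx⟩ := d
  obtain ⟨y, hy⟩ := hx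
  have hye : y ∈ G.ends e := by
    rw [hy]
    simp
  obtain ⟨a, b, hab, h⟩ := hC.exists_pair hloop ⟨e, he, hye⟩
  by_cases hae : a = e
  · have hb := (h b).2 (Or.inr rfl)
    exact ⟨⟨(y, b), hb⟩, hy, fun hbe => hab (hae.trans hbe.symm)⟩
  · have ha := (h a).2 (Or.inl rfl)
    exact ⟨⟨(y, a), ha⟩, hy, hae⟩

theorem IsCircuit.exists_isCyclicOrder (hC : G.IsCircuit C)
    (hloop : ∀ e ∈ C, ¬ (G.ends e).IsDiag) {x : G.V} (hx : ∃ e ∈ C, x ∈ G.ends e) :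
    ∃ n v e, IsCyclicOrder C n v e ∧ v 0 = x := by
  obtain ⟨e₀, he₀, hx₀⟩ := hx
  choose step hstep hne using hC.exists_step hloop
  let d : ℕ → {d : G.V × G.E // d.2 ∈ C ∧ d.1 ∈ G.ends d.2} :=
    fun i => step^[i] ⟨(x, e₀), he₀, hx₀⟩
  have hd : ∀ i, d (i + 1) = step (d i) := fun i => Function.iterate_succ_apply' _ _ _
  let v : ℕ → G.V := fun i => (d i).1.1
  let e : ℕ → G.E := fun i => (d i).1.2
  have hends : ∀ i, G.ends (e i) = s(v i, v (i + 1)) := fun i => by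
    simpa only [v, e, hd] using hstep (d i)
  have hsucc : ∀ i, e (i + 1) ≠ e i := fun i => by
    simpa only [e, hd] using hne (d i)
  have heC : ∀ i, e i ∈ C := fun i => (d i).2.1
  have hv : ∀ i, v i ∈ G.ends (e i) := fun i => (d i).2.2
  have hv' : ∀ i, v (i + 1) ∈ G.ends (e i) := fun i => by
    rw [hends]
    simp
  have hvne : ∀ i, v i ≠ v (i + 1) := fun i h => hloop _ (heC i) (by rw [hends, h]; simp)
  have hrep : ∃ n, ∃ m < n, v m = v n := by
    obtain ⟨i, j, hij, h⟩ := Finite.exists_ne_map_eq_of_infinite v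
    rcases lt_or_gt_of_ne hij with h' | h'
    · exact ⟨j, i, h', h⟩
    · exact ⟨i, j, h', h.symm⟩
  classical
  obtain ⟨m, hmn, hm⟩ := Nat.find_spec hrep
  set n := Nat.find hrep with hn
  have hinj' : ∀ i j, i < j → j < n → v i ≠ v j := fun i j hij hj h =>
    Nat.find_min hrep hj ⟨i, hij, h⟩
  have hinj : ∀ i < n, ∀ j < n, v i = v j → i = j := by
    intro i hi j hj h
    rcases lt_trichotomy i j with h' | h' | h'
    · exact (hinj' i j h' hj h).elim
    · exact h'
    · exact (hinj' j i h' hi h.symm).elim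
  have hm0 : m = 0 := by
    by_contra hm0
    obtain ⟨k, rfl⟩ := Nat.exists_eq_succ_of_ne_zero hm0
    obtain ⟨l, hl⟩ := Nat.exists_eq_succ_of_ne_zero (show n ≠ 0 by omega)
    rw [Nat.succ_eq_add_one] at hl hmn hm
    have hln : v (k + 1) ∈ G.ends (e l) := by
      rw [hm, hl]
      exact hv' l
    have hmem : v l ∈ G.ends (e l) := hv l
    rcases hC.eq_or_eq hloop (heC k) (heC (k + 1)) (heC l) (hv' k) (hv (k + 1)) hln
      (hsucc k).symm with h | h
    · rw [h, hends, Sym2.mem_iff] at hmem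
      rcases hmem with h' | h'
      · have := hinj l (by omega) k (by omega) h'
        omega
      · have := hinj l (by omega) (k + 1) (by omega) h'
        subst this
        exact hvne (k + 1) (by rw [hm, hl])
    · rw [h, hends, Sym2.mem_iff] at hmem
      rcases hmem with h' | h'
      · have := hinj l (by omega) (k + 1) (by omega) h'
        subst this
        exact hvne (k + 1) (by rw [hm, hl])
      · rcases Nat.lt_or_ge (k + 1 + 1) n with h2 | h2
        · have := hinj l (by omega) (k + 1 + 1) h2 h'
          subst this
          exact hsucc (k + 1) h
        · have h3 : k + 1 = l := by omega
          subst h3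
          exact hvne _ h'
  subst hm0
  have hn2 : 2 ≤ n := by
    by_contra h
    have h1 : n = 1 := by omega
    rw [h1] at hm
    exact hvne 0 hm
  have heinj' : ∀ i j, i < j → j < n → e i ≠ e j := by
    intro i j hij hj h
    have hmem : v j ∈ G.ends (e i) := h ▸ hv j
    have hmem' : v i ∈ G.ends (e j) := h ▸ hv i
    rw [hends, Sym2.mem_iff] at hmem hmem'
    rcases hmem with h' | h'
    · exact hinj' i j hij hj h'.symm
    · have := hinj j hj (i + 1) (by omega) h'
      subst this
      exact hsucc i h.symm
  refine ⟨n, v, e, ⟨fun i _ => hends i, hm.symm, hinj, ?_, ?_⟩, rfl⟩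
  · intro i hi j hj h
    rcases lt_trichotomy i j with h' | h' | h'
    · exact (heinj' i j h' hj h).elim
    · exact h'
    · exact (heinj' j i h' hi h.symm).elim
  have hcov : ∀ i < n, ∀ y ∈ C, v i ∈ G.ends y → ∃ j < n, e j = y := by
    intro i hi y hy hvy
    rcases Nat.eq_zero_or_pos i with rfl | hi0
    · obtain ⟨l, hl⟩ := Nat.exists_eq_succ_of_ne_zero (show n ≠ 0 by omega)
      have hl0 : v 0 ∈ G.ends (e l) := by
        rw [hm, hl]
        exact hv' l
      rcases hC.eq_or_eq hloop (heC 0) (heC l) hy (hv 0) hl0 hvy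
        (heinj' 0 l (by omega) (by omega)) with h | h
      · exact ⟨0, by omega, h.symm⟩
      · exact ⟨l, by omega, h.symm⟩
    · obtain ⟨l, rfl⟩ := Nat.exists_eq_succ_of_ne_zero hi0.ne'
      rcases hC.eq_or_eq hloop (heC l) (heC (l + 1)) hy (hv' l) (hv (l + 1)) hvy
        (hsucc l).symm with h | h
      · exact ⟨l, by omega, h.symm⟩
      · exact ⟨l + 1, by omega, h.symm⟩
  have hreach : ∀ w, G.Reaches C (v 0) w → ∃ i < n, v i = w := by
    intro w hw
    induction hw with
    | refl => exact ⟨0, by omega, rfl⟩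
    | @tail _ c _ hstep ih =>
      obtain ⟨i, hi, rfl⟩ := ih
      obtain ⟨y, hy, hyends⟩ := hstep
      obtain ⟨j, hj, rfl⟩ := hcov i hi y hy (by rw [hyends]; simp)
      have hmem := Sym2.mem_mk_right (v i) c
      rw [← hyends, hends, Sym2.mem_iff] at hmem
      rcases hmem with h | h
      · exact ⟨j, hj, h.symm⟩
      · rcases Nat.lt_or_ge (j + 1) n with h2 | h2
        · exact ⟨j + 1, h2, h.symm⟩
        · exact ⟨0, by omega, by rw [h, hm]; congr 1; omega⟩
  intro y
  refine ⟨fun hy => ?_, ?_⟩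
  · obtain ⟨⟨a, b⟩, hab⟩ := Quot.exists_rep (G.ends y)
    have ha : a ∈ G.ends y := by
      rw [← hab]
      exact Sym2.mem_mk_left a b
    obtain ⟨i, hi, hia⟩ := hreach a (hC.2.2 _ _ ⟨e 0, heC 0, hv 0⟩ ⟨y, hy, ha⟩)
    exact hcov i hi y hy (hia ▸ ha)
  · rintro ⟨i, -, rfl⟩
    exact heC i

end Circuit

theorem IsDeg2Path.not_isDiag {n : ℕ} {W : G.Walk n} (hW : G.IsDeg2Path W) {x : G.E}
    (hx : x ∈ Set.range W.edge) : ¬ (G.ends x).IsDiag := by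
  obtain ⟨i, rfl⟩ := hx
  rw [W.compat, Sym2.mk_isDiag_iff]
  exact fun h => (Fin.castSucc_lt_succ (i := i)).ne (hW.2.1.1 h)

/-- A path with internal vertices of degree `2` that meets a set of edges closed under passing
through vertices of degree `2` is contained in it. -/
theorem IsDeg2Path.le_ncard {n : ℕ} {W : G.Walk n} (hW : G.IsDeg2Path W) {B : Set G.E} {x : G.E}
    (hx : x ∈ Set.range W.edge) (hxB : x ∈ B)
    (hB : ∀ b ∈ B, ∀ a ∈ G.ends b, G.degree a = 2 → ∀ y, a ∈ G.ends y → y ∈ B) :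
    n ≤ B.ncard := by
  have hadj : ∀ i (hi : i + 1 < n),
      W.edge ⟨i, by omega⟩ ∈ B ↔ W.edge ⟨i + 1, hi⟩ ∈ B := by
    intro i hi
    have hd := hW.2.2 ⟨i + 1, by omega⟩ (by simp) hi
    have h1 : W.vtx ⟨i + 1, by omega⟩ ∈ G.ends (W.edge ⟨i, by omega⟩) := by
      rw [W.compat]
      exact Sym2.mem_mk_right _ _
    have h2 : W.vtx ⟨i + 1, by omega⟩ ∈ G.ends (W.edge ⟨i + 1, hi⟩) := by
      rw [W.compat]
      exact Sym2.mem_mk_left _ _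
    exact ⟨fun h => hB _ h _ h1 hd _ h2, fun h => hB _ h _ h2 hd _ h1⟩
  have hzero : ∀ i (hi : i < n), W.edge ⟨i, hi⟩ ∈ B ↔ W.edge ⟨0, by omega⟩ ∈ B := by
    intro i
    induction i with
    | zero => exact fun _ => Iff.rfl
    | succ i ih => exact fun hi => (hadj i hi).symm.trans (ih (by omega))
  obtain ⟨i, rfl⟩ := hx
  have h0 := (hzero i i.2).1 hxB
  have hsub : Set.range W.edge ⊆ B := by
    rintro _ ⟨k, rfl⟩
    exact (hzero k k.2).2 h0
  have hcard := Set.ncard_le_ncard hsub (Set.toFinite _)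
  rwa [← Set.image_univ, Set.ncard_image_of_injective _ hW.2.1.2, Set.ncard_univ,
    Nat.card_fin] at hcard

/-- A vertex incident to an edge outside `C`. -/
def IsBranch (G : Multigraph) (C : Set G.E) (x : G.V) : Prop := ∃ y ∉ C, x ∈ G.ends y

theorem IsCircuit.not_isBranch {C : Set G.E} (hC : G.IsCircuit C) {x : G.V}
    (hx : ∃ e ∈ C, x ∈ G.ends e) (hd : G.degree x = 2) : ¬ G.IsBranch C x := by
  rintro ⟨y, hyC, hxy⟩
  have h := hC.2.1 x hx
  have h1 : {e | e ∈ C ∧ x ∈ G.ends e ∧ ¬ (G.ends e).IsDiag} ⊆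
      {e | x ∈ G.ends e ∧ ¬ (G.ends e).IsDiag} := fun e he => he.2
  have h2 : {e | e ∈ C ∧ G.ends e = s(x, x)} ⊆ {e | G.ends e = s(x, x)} := fun e he => he.2
  have c1 := Set.ncard_le_ncard h1 (Set.toFinite _)
  have c2 := Set.ncard_le_ncard h2 (Set.toFinite _)
  change Set.ncard {e | e ∈ C ∧ x ∈ G.ends e ∧ ¬ (G.ends e).IsDiag} +
    2 * Set.ncard {e | e ∈ C ∧ G.ends e = s(x, x)} = 2 at h
  change Set.ncard {e | x ∈ G.ends e ∧ ¬ (G.ends e).IsDiag} +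
    2 * Set.ncard {e | G.ends e = s(x, x)} = 2 at hd
  by_cases hdiag : (G.ends y).IsDiag
  · have hy : y ∈ {e | G.ends e = s(x, x)} := by
      obtain ⟨z, hz⟩ := hxy
      rw [hz, Sym2.mk_isDiag_iff] at hdiag
      exact hz.trans (by rw [hdiag])
    rw [← Set.eq_of_subset_of_ncard_le h2 (by omega) (Set.toFinite _)] at hy
    exact hyC hy.1
  · have hy : y ∈ {e | x ∈ G.ends e ∧ ¬ (G.ends e).IsDiag} := ⟨hxy, hdiag⟩
    rw [← Set.eq_of_subset_of_ncard_le h1 (by omega) (Set.toFinite _)] at hy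
    exact hyC hy.1

theorem zmodTwo_add_self (a : ZMod 2) : a + a = 0 := CharTwo.add_self_eq_zero a

open Classical in
theorem exists_path_to (w : G.E → ZMod 2) (P : Set G.V)
    (hP : ∀ z ∉ P, ∑ e, G.inc z e * w e = 0) {x : G.V} (hx : ∑ e, G.inc x e * w e = 1) :
    ∃ y ∈ P, y ≠ x ∧ ∃ t : G.E → ZMod 2, (∀ e, w e = 0 → t e = 0) ∧
      ∀ z, ∑ e, G.inc z e * t e = (if z = x then 1 else 0) + (if z = y then 1 else 0) := by
  have hpath : ∀ y, G.Reaches {e | w e ≠ 0} x y → ∃ t : G.E → ZMod 2,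
      (∀ e, w e = 0 → t e = 0) ∧
      ∀ z, ∑ e, G.inc z e * t e = (if z = x then 1 else 0) + (if z = y then 1 else 0) := by
    intro y hy
    induction hy with
    | refl => exact ⟨0, fun _ _ => rfl, fun z => by simp [zmodTwo_add_self]⟩
    | @tail b c _ hstep ih =>
      obtain ⟨t, ht, hb⟩ := ih
      obtain ⟨a, ha, hends⟩ := hstep
      refine ⟨fun e => t e + if e = a then 1 else 0, fun e he => ?_, fun z => ?_⟩
      · have : e ≠ a := fun h => ha (h ▸ he)
        simp [ht e he, this]
      · simp only [mul_add, Finset.sum_add_distrib, hb, mul_ite, mul_one, mul_zero,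
          Finset.sum_ite_eq', Finset.mem_univ, if_true, inc_eq hends]
        linear_combination zmodTwo_add_self (if z = b then 1 else 0)
  by_contra hcon
  have hK : ∀ y, G.Reaches {e | w e ≠ 0} x y → y ≠ x → ∑ e, G.inc y e * w e = 0 :=
    fun y hy hyx => hP y fun hyP => hcon ⟨y, hyP, hyx, hpath y hy⟩
  have h1 : ∑ z ∈ Finset.univ.filter (G.Reaches {e | w e ≠ 0} x), ∑ e, G.inc z e * w e = 1 := by
    rw [Finset.sum_eq_single x, hx]
    · intro z hz hzx
      exact hK z (Finset.mem_filter.1 hz).2 hzx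
    · intro h
      exact (h (Finset.mem_filter.2 ⟨Finset.mem_univ _, Relation.ReflTransGen.refl⟩)).elim
  rw [Finset.sum_comm] at h1
  refine zero_ne_one (h1.symm.trans (Finset.sum_eq_zero fun e _ => ?_)).symm
  rw [← Finset.sum_mul]
  by_cases he : w e = 0
  · rw [he, mul_zero]
  obtain ⟨⟨a, b⟩, hab⟩ := Quot.exists_rep (G.ends e)
  have hab' : G.ends e = s(a, b) := hab.symm
  have hiff : G.Reaches {e | w e ≠ 0} x a ↔ G.Reaches {e | w e ≠ 0} x b :=
    ⟨fun h => h.tail ⟨e, he, hab'⟩, fun h => h.tail ⟨e, he, hab'.trans Sym2.eq_swap⟩⟩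
  simp only [inc_eq hab', Finset.sum_add_distrib, Finset.sum_ite_eq', Finset.mem_filter,
    Finset.mem_univ, true_and, hiff, zmodTwo_add_self, zero_mul]

section CyclicOrder

variable {C : Set G.E} {n : ℕ} {v : ℕ → G.V} {e : ℕ → G.E}

theorem IsCyclicOrder.ncard_image (O : IsCyclicOrder C n v e) (s : Finset ℕ)
    (hs : ∀ i ∈ s, i < n) : (e '' s).ncard = s.card := by
  rw [Set.InjOn.ncard_image, Set.ncard_coe_finset]
  exact fun i hi j hj h => O.edge_inj i (hs i hi) j (hs j hj) h

theorem IsCyclicOrder.ncard_eq (O : IsCyclicOrder C n v e) : C.ncard = n := by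
  rw [← Finset.card_range n, ← O.ncard_image _ fun i => Finset.mem_range.1]
  congr 1
  ext x
  simp [O.mem_iff]

theorem IsCyclicOrder.mem (O : IsCyclicOrder C n v e) {i : ℕ} (hi : i < n) : e i ∈ C :=
  (O.mem_iff _).2 ⟨i, hi, rfl⟩

theorem IsCyclicOrder.mem_left (O : IsCyclicOrder C n v e) {i : ℕ} (hi : i < n) :
    v i ∈ G.ends (e i) := by
  rw [O.ends i hi]
  exact Sym2.mem_mk_left _ _

theorem IsCyclicOrder.mem_right (O : IsCyclicOrder C n v e) {i : ℕ} (hi : i < n) :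
    v (i + 1) ∈ G.ends (e i) := by
  rw [O.ends i hi]
  exact Sym2.mem_mk_right _ _

theorem IsCyclicOrder.exists_vtx (O : IsCyclicOrder C n v e) {y : G.E} (hy : y ∈ C) {a : G.V}
    (ha : a ∈ G.ends y) : ∃ i < n, v i = a := by
  obtain ⟨i, hi, rfl⟩ := (O.mem_iff y).1 hy
  rw [O.ends i hi, Sym2.mem_iff] at ha
  rcases ha with rfl | rfl
  · exact ⟨i, hi, rfl⟩
  · rcases Nat.lt_or_ge (i + 1) n with h | h
    · exact ⟨i + 1, h, rfl⟩
    · refine ⟨0, by omega, ?_⟩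
      rw [← O.closed]
      congr 1
      omega

theorem IsCyclicOrder.eq_of_mem (O : IsCyclicOrder C n v e) {l m : ℕ} (hl : l + 1 < n) (hm : m < n)
    (h : v (l + 1) ∈ G.ends (e m)) : m = l ∨ m = l + 1 := by
  rw [O.ends m hm, Sym2.mem_iff] at h
  rcases h with h | h
  · exact Or.inr (O.vtx_inj _ hl _ hm h).symm
  · rcases Nat.lt_or_ge (m + 1) n with h' | h'
    · have := O.vtx_inj _ hl _ h' h
      omega
    · rw [show m + 1 = n by omega, O.closed] at h
      have := O.vtx_inj _ hl 0 (by omega) h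
      omega

open Classical in
theorem IsCyclicOrder.sum_inc_mul (O : IsCyclicOrder C n v e) {l : ℕ} (hl : l + 1 < n)
    (u : G.E → ZMod 2) : ∑ x, G.inc (v (l + 1)) x * u x =
      u (e l) + u (e (l + 1)) + ∑ x, G.inc (v (l + 1)) x * (if x ∈ C then 0 else u x) := by
  have hsplit : ∀ x, G.inc (v (l + 1)) x * u x = G.inc (v (l + 1)) x * (if x ∈ C then u x else 0) +
      G.inc (v (l + 1)) x * (if x ∈ C then 0 else u x) := by
    intro x
    split_ifs <;> simp
  have hne : e l ≠ e (l + 1) := fun h => by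
    have := O.edge_inj _ (by omega) _ hl h
    omega
  have h1 : v (l + 1) ≠ v l := fun h => by
    have := O.vtx_inj _ hl _ (by omega) h
    omega
  have h2 : v (l + 1) ≠ v (l + 1 + 1) := fun h => by
    have hmem := O.mem_right hl
    rcases Nat.lt_or_ge (l + 1 + 1) n with h' | h'
    · have := O.vtx_inj _ hl _ h' h
      omega
    · rw [show l + 1 + 1 = n by omega, O.closed] at h
      have := O.vtx_inj _ hl 0 (by omega) h
      omega
  rw [Finset.sum_congr rfl fun x _ => hsplit x, Finset.sum_add_distrib]
  congr 1
  rw [Finset.sum_eq_add (e l) (e (l + 1)) hne]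
  · simp [inc_eq (O.ends l (by omega)), inc_eq (O.ends (l + 1) hl), h1, h2, O.mem hl,
      O.mem (show l < n by omega)]
  · rintro x - ⟨hx1, hx2⟩
    by_cases hx : x ∈ C
    · obtain ⟨m, hm, rfl⟩ := (O.mem_iff x).1 hx
      rw [inc_eq_zero, zero_mul]
      intro h
      rcases O.eq_of_mem hl hm h with rfl | rfl
      · exact hx1 rfl
      · exact hx2 rfl
    · simp [hx]
  · simp
  · simp

open Classical in
/-- The characteristic function of a set of consecutive edges. -/
noncomputable def arc (e : ℕ → G.E) (p r : ℕ) (x : G.E) : ZMod 2 :=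
  ∑ k ∈ Finset.Ico p r, if x = e k then 1 else 0

open Classical in
theorem IsCyclicOrder.sum_inc_mul_arc (O : IsCyclicOrder C n v e) {p r : ℕ} (hpr : p ≤ r)
    (hr : r ≤ n) (z : G.V) : ∑ x, G.inc z x * arc e p r x =
      (if z = v p then 1 else 0) + (if z = v r then 1 else 0) := by
  unfold arc
  simp only [Finset.mul_sum, mul_ite, mul_one, mul_zero]
  rw [Finset.sum_comm]
  simp only [Finset.sum_ite_eq', Finset.mem_univ, if_true]
  induction r, hpr using Nat.le_induction with
  | base => simp [zmodTwo_add_self]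
  | succ r hpr ih =>
    rw [Finset.sum_Ico_succ_top hpr, ih (by omega), inc_eq (O.ends r (by omega))]
    linear_combination zmodTwo_add_self (if z = v r then 1 else 0)

theorem IsCyclicOrder.arc_of_notMem (O : IsCyclicOrder C n v e) {p r : ℕ} (hr : r ≤ n) {x : G.E}
    (hx : x ∉ C) : arc e p r x = 0 := by
  refine Finset.sum_eq_zero fun k hk => if_neg ?_
  rintro rfl
  exact hx (O.mem ((Finset.mem_Ico.1 hk).2.trans_le hr))

theorem IsCyclicOrder.arc_edge (O : IsCyclicOrder C n v e) {p r i : ℕ} (hr : r ≤ n) (hi : i < n) :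
    arc e p r (e i) = if p ≤ i ∧ i < r then 1 else 0 := by
  classical
  unfold arc
  rw [Finset.sum_congr rfl (g := fun k => if i = k then 1 else 0) fun k hk => ?_]
  · simp
  · have hiff : e i = e k ↔ i = k :=
      ⟨O.edge_inj _ hi _ ((Finset.mem_Ico.1 hk).2.trans_le hr), fun h => h ▸ rfl⟩
    simp only [hiff]

end CyclicOrder

/-- The sign of an element of `ℤ₂`. -/
def sgn (a : ZMod 2) : ℤ := if a = 0 then 1 else -1

theorem sgn_eq_one_or (a : ZMod 2) : sgn a = 1 ∨ sgn a = -1 := by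
  unfold sgn
  split_ifs <;> simp

theorem sgn_add_one (a : ZMod 2) : sgn (a + 1) = -sgn a := by
  revert a
  decide

theorem sum_flip {s s' : ℕ → ℤ} {n p r : ℕ}
    (h : ∀ i < n, s' i = if p ≤ i ∧ i < r then -s i else s i) :
    (∀ k, p ≤ k → k ≤ r → k ≤ n →
      ∑ i ∈ Finset.range k, s' i = 2 * ∑ i ∈ Finset.range p, s i - ∑ i ∈ Finset.range k, s i) ∧
    (∀ k, p ≤ r → r ≤ k → k ≤ n → ∑ i ∈ Finset.range k, s' i =
      ∑ i ∈ Finset.range k, s i -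
        2 * (∑ i ∈ Finset.range r, s i - ∑ i ∈ Finset.range p, s i)) := by
  have h1 : ∀ k, p ≤ k → k ≤ r → k ≤ n →
      ∑ i ∈ Finset.range k, s' i =
        2 * ∑ i ∈ Finset.range p, s i - ∑ i ∈ Finset.range k, s i := by
    intro k hk
    induction k, hk using Nat.le_induction with
    | base =>
      intro _ hn
      rw [Finset.sum_congr rfl (g := s) fun i hi => ?_]
      · ring
      · rw [h i ((Finset.mem_range.1 hi).trans_le hn),
          if_neg fun hp => hp.1.not_gt (Finset.mem_range.1 hi)]
    | succ k hk ih =>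
      intro hr hn
      rw [Finset.sum_range_succ, Finset.sum_range_succ, ih (by omega) (by omega),
        h k (by omega), if_pos ⟨hk, hr⟩]
      ring
  refine ⟨h1, fun k hpr hk => ?_⟩
  induction k, hk using Nat.le_induction with
  | base =>
    intro hn
    rw [h1 r hpr le_rfl hn]
    ring
  | succ k hk ih =>
    intro hn
    rw [Finset.sum_range_succ, Finset.sum_range_succ, ih (by omega), h k (by omega),
      if_neg fun hp => hp.2.not_ge hk]
    ring

theorem exists_pair_of_dot (l : ZMod 2 × ZMod 2) (hl : l ≠ 0) (a : ZMod 2) :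
    ∃ z₁ z₂ : ZMod 2 × ZMod 2, z₁ ≠ z₂ ∧ dot l z₁ = a ∧ dot l z₂ = a := by
  revert l a
  decide

theorem exists_dual (l d : ZMod 2 × ZMod 2) (h : dot l d = 1) :
    ∃ c m : ZMod 2 × ZMod 2, dot l c = 1 ∧ dot m c = 0 ∧ dot m d = 1 := by
  revert l d
  decide

theorem pair_add_self (z : ZMod 2 × ZMod 2) : z + z = 0 := CharTwo.add_self_eq_zero z

section CyclicOrder

variable {C : Set G.E} {n : ℕ} {v : ℕ → G.V} {e : ℕ → G.E}

/-- The signed count of the first `k` edges along a circuit, by the value of a functional. -/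
def signedCount (e : ℕ → G.E) (g : G.E → ZMod 2 × ZMod 2) (l : ZMod 2 × ZMod 2) (k : ℕ) : ℤ :=
  ∑ i ∈ Finset.range k, sgn (dot l (g (e i)))

theorem signedCount_succ (e : ℕ → G.E) (g : G.E → ZMod 2 × ZMod 2) (l : ZMod 2 × ZMod 2) (k : ℕ) :
    signedCount e g l (k + 1) = signedCount e g l k + sgn (dot l (g (e k))) :=
  Finset.sum_range_succ _ _

theorem IsCyclicOrder.exists_of_le_signedCount (O : IsCyclicOrder C n v e)
    {g : G.E → ZMod 2 × ZMod 2} (hg : G.IsFlow g) {l : ZMod 2 × ZMod 2} (hl : l ≠ 0) {q : ℕ}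
    (hq : (q : ℤ) ≤ |signedCount e g l n|) :
    ∃ g' : G.E → ZMod 2 × ZMod 2, G.IsFlow g' ∧ (∀ x ∉ C, g' x = g x) ∧
      4 * {x ∈ C | g' x = 0}.ncard + q ≤ n := by
  classical
  let N : ZMod 2 × ZMod 2 → Finset ℕ := fun z => (Finset.range n).filter fun i => g (e i) = z
  let M : ZMod 2 → Finset ℕ := fun a => (Finset.range n).filter fun i => dot l (g (e i)) = a
  have hM : (M 0).card + (M 1).card = n := by
    rw [← Finset.card_union_of_disjoint]
    · conv_rhs => rw [← Finset.card_range n]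
      congr 1
      ext i
      have : ∀ a : ZMod 2, a = 0 ∨ a = 1 := by decide
      simp only [M, Finset.mem_union, Finset.mem_filter, ← and_or_left, this, and_true]
    · rw [Finset.disjoint_left]
      intro i h0 h1
      exact zero_ne_one ((Finset.mem_filter.1 h0).2.symm.trans (Finset.mem_filter.1 h1).2)
  have hF : signedCount e g l n = (M 0).card - (M 1).card := by
    have : ∀ a : ZMod 2, sgn a = (if a = 0 then 1 else 0) - (if a = 1 then 1 else 0) := by decide
    simp only [signedCount, this, Finset.sum_sub_distrib, Finset.sum_boole, M]
  obtain ⟨a, ha⟩ : ∃ a, 2 * (M a).card + q ≤ n := by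
    rcases abs_cases (signedCount e g l n) with ⟨h, -⟩ | ⟨h, -⟩
    · exact ⟨1, by omega⟩
    · exact ⟨0, by omega⟩
  obtain ⟨z₁, z₂, hz, h1, h2⟩ := exists_pair_of_dot l hl a
  have hN : (N z₁).card + (N z₂).card ≤ (M a).card := by
    rw [← Finset.card_union_of_disjoint]
    · refine Finset.card_le_card fun i hi => ?_
      simp only [N, M, Finset.mem_union, Finset.mem_filter] at hi ⊢
      rcases hi with ⟨hi, h⟩ | ⟨hi, h⟩
      · exact ⟨hi, h ▸ h1⟩
      · exact ⟨hi, h ▸ h2⟩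
    · rw [Finset.disjoint_left]
      intro i h1 h2
      exact hz ((Finset.mem_filter.1 h1).2.symm.trans (Finset.mem_filter.1 h2).2)
  obtain ⟨z, hz⟩ : ∃ z, 4 * (N z).card + q ≤ n := by
    rcases le_total (N z₁).card (N z₂).card with h | h
    · exact ⟨z₁, by omega⟩
    · exact ⟨z₂, by omega⟩
  refine ⟨fun x => g x + arc e 0 n x • z, hg.add_smul (fun y => ?_) z, fun x hx => ?_, ?_⟩
  · rw [O.sum_inc_mul_arc (Nat.zero_le n) le_rfl, O.closed, zmodTwo_add_self]
  · simp only [O.arc_of_notMem le_rfl hx, zero_smul, add_zero]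
  · convert hz using 3
    rw [← O.ncard_image (N z) fun i hi => Finset.mem_range.1 (Finset.mem_filter.1 hi).1]
    congr 1
    ext x
    simp only [O.mem_iff, Set.mem_image, Finset.mem_coe, N, Finset.mem_filter,
      Finset.mem_range]
    have key : ∀ i < n, g (e i) + arc e 0 n (e i) • z = 0 ↔ g (e i) = z := by
      intro i hi
      rw [O.arc_edge le_rfl hi, if_pos ⟨Nat.zero_le i, hi⟩, one_smul]
      exact ⟨fun h => add_right_cancel (h.trans (pair_add_self z).symm),
        fun h => h ▸ pair_add_self _⟩
    constructor
    · rintro ⟨⟨i, hi, rfl⟩, h⟩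
      exact ⟨i, ⟨hi, (key i hi).1 h⟩, rfl⟩
    · rintro ⟨i, ⟨hi, h⟩, rfl⟩
      exact ⟨⟨i, hi, rfl⟩, (key i hi).2 h⟩

theorem IsCyclicOrder.apply_succ_eq (O : IsCyclicOrder C n v e) {g : G.E → ZMod 2 × ZMod 2}
    (hg : G.IsFlow g) {i : ℕ} (hi : i + 1 < n) (hb : ¬ G.IsBranch C (v (i + 1))) :
    g (e (i + 1)) = g (e i) := by
  classical
  have key : ∀ l, dot l (g (e i)) = dot l (g (e (i + 1))) := by
    intro l
    have h := O.sum_inc_mul hi fun x => dot l (g x)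
    rw [hg.sum_inc_mul_dot, Finset.sum_eq_zero fun x _ => ?_, add_zero] at h
    · exact CharTwo.add_eq_zero.1 h.symm
    · split_ifs with hx
      · rw [mul_zero]
      · rw [inc_eq_zero fun h => hb ⟨x, hx, h⟩, zero_mul]
  refine Prod.ext ?_ ?_
  · simpa [dot] using (key (1, 0)).symm
  · simpa [dot] using (key (0, 1)).symm

theorem IsCyclicOrder.signedCount_run (O : IsCyclicOrder C n v e) {g : G.E → ZMod 2 × ZMod 2}
    (hg : G.IsFlow g) (l : ZMod 2 × ZMod 2) {i k : ℕ} (hik : i ≤ k) (hk : k ≤ n)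
    (hb : ∀ m, i < m → m < k → ¬ G.IsBranch C (v m)) :
    signedCount e g l k = signedCount e g l i + sgn (dot l (g (e i))) * ((k : ℤ) - i) := by
  have hconst : ∀ m, i ≤ m → m < k → g (e m) = g (e i) := by
    intro m hm
    induction m, hm using Nat.le_induction with
    | base => exact fun _ => rfl
    | succ m hm ih =>
      exact fun h => (O.apply_succ_eq hg (by omega) (hb _ (by omega) h)).trans (ih (by omega))
  have key : ∀ m, i ≤ m → m ≤ k →
      signedCount e g l m = signedCount e g l i + sgn (dot l (g (e i))) * ((m : ℤ) - i) := by
    intro m hm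
    induction m, hm using Nat.le_induction with
    | base => simp
    | succ m hm ih =>
      intro h
      rw [signedCount_succ, ih (by omega), hconst m hm h]
      push_cast
      ring
  exact key k hik le_rfl

/-- Switching a flow along a path outside `C` and an arc of `C` that close up to a cycle. -/
theorem IsCyclicOrder.exists_switch (O : IsCyclicOrder C n v e) {g : G.E → ZMod 2 × ZMod 2}
    (hg : G.IsFlow g) {l : ZMod 2 × ZMod 2} {j : ℕ} (hj : j + 1 < n)
    (hd : dot l (g (e j) + g (e (j + 1))) = 1) :
    ∃ k < n, k ≠ j + 1 ∧ G.IsBranch C (v k) ∧ G.IsBranch C (v (j + 1)) ∧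
      ∃ g' : G.E → ZMod 2 × ZMod 2, G.IsFlow g' ∧ (∀ x ∉ C, g' x = 0 ↔ g x = 0) ∧
        ∀ i < n, sgn (dot l (g' (e i))) =
          if min k (j + 1) ≤ i ∧ i < max k (j + 1) then -sgn (dot l (g (e i)))
          else sgn (dot l (g (e i))) := by
  classical
  obtain ⟨c, m, hlc, hmc, hmd⟩ := exists_dual l _ hd
  let w : G.E → ZMod 2 := fun x => if x ∈ C then 0 else dot m (g x)
  have hP : ∀ z ∉ v '' Set.Iio n, ∑ x, G.inc z x * w x = 0 := by
    intro z hz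
    rw [← hg.sum_inc_mul_dot m z]
    refine Finset.sum_congr rfl fun x _ => ?_
    by_cases hx : x ∈ C
    · rw [inc_eq_zero, zero_mul, zero_mul]
      intro h
      obtain ⟨i, hi, hiz⟩ := O.exists_vtx hx h
      exact hz ⟨i, hi, hiz⟩
    · simp only [w, if_neg hx]
  have hx : ∑ x, G.inc (v (j + 1)) x * w x = 1 := by
    have h := O.sum_inc_mul hj fun x => dot m (g x)
    rw [hg.sum_inc_mul_dot, ← dot_add, hmd] at h
    exact (CharTwo.add_eq_zero.1 h.symm).symm
  obtain ⟨_, ⟨k, hk, rfl⟩, hne, t, ht, hbd⟩ := exists_path_to w _ hP hx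
  have hbranch : ∀ z, ∑ x, G.inc z x * t x = 1 → G.IsBranch C z := by
    intro z hz
    by_contra hcon
    refine zero_ne_one ((Finset.sum_eq_zero fun x _ => ?_).symm.trans hz)
    by_cases hxC : x ∈ C
    · rw [ht x (if_pos hxC), mul_zero]
    · rw [inc_eq_zero fun h => hcon ⟨x, hxC, h⟩, zero_mul]
  have hkn : k < n := hk
  have hmax : max k (j + 1) ≤ n := by omega
  have htC : ∀ x ∈ C, t x = 0 := fun x hxC => ht x (if_pos hxC)
  refine ⟨k, hk, fun h => hne (h ▸ rfl), hbranch _ ?_, hbranch _ ?_,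
    fun x => g x + (t x + arc e (min k (j + 1)) (max k (j + 1)) x) • c,
    hg.add_smul (fun z => ?_) c, fun x hxC => ?_, fun i hi => ?_⟩
  · rw [hbd, if_neg hne, if_pos rfl, zero_add]
  · rw [hbd, if_neg hne.symm, if_pos rfl, add_zero]
  · simp only [mul_add, Finset.sum_add_distrib, hbd,
      O.sum_inc_mul_arc (min_le_max (a := k) (b := j + 1)) hmax]
    rcases le_total k (j + 1) with h | h
    · rw [min_eq_left h, max_eq_right h]
      linear_combination zmodTwo_add_self (if z = v k then 1 else 0) +
        zmodTwo_add_self (if z = v (j + 1) then 1 else 0)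
    · rw [min_eq_right h, max_eq_left h]
      linear_combination zmodTwo_add_self (if z = v k then 1 else 0) +
        zmodTwo_add_self (if z = v (j + 1) then 1 else 0)
  · simp only [O.arc_of_notMem hmax hxC, add_zero]
    by_cases hw : w x = 0
    · rw [ht x hw, zero_smul, add_zero]
    · have hm : dot m (g x) ≠ 0 := by simpa only [w, if_neg hxC] using hw
      have h0 : dot m 0 = 0 := by simp [dot]
      refine iff_of_false (fun h => hm ?_) fun h => hm (by rw [h, h0])
      rw [← h0, ← h, dot_add, dot_smul, hmc, mul_zero, add_zero]
  · simp only [htC _ (O.mem hi), zero_add, O.arc_edge hmax hi]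
    split_ifs with h
    · rw [one_smul, dot_add, hlc, sgn_add_one]
    · rw [zero_smul, add_zero]

theorem dot_add_eq_one {l x y : ZMod 2 × ZMod 2} (h : sgn (dot l x) ≠ sgn (dot l y)) :
    dot l (x + y) = 1 := by
  rw [dot_add]
  generalize dot l x = a at h ⊢
  generalize dot l y = b at h ⊢
  revert a b
  decide

theorem IsCyclicOrder.exists_le_signedCount (O : IsCyclicOrder C n v e) (hn : 0 < n) {q : ℕ}
    (h0 : G.IsBranch C (v 0))
    (hrun : ∀ i k, i < k → k ≤ n → G.IsBranch C (v i) → G.IsBranch C (v k) →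
      (∀ m, i < m → m < k → ¬ G.IsBranch C (v m)) → i + q ≤ k)
    {f : G.E → ZMod 2 × ZMod 2} (hf : G.IsFlow f) :
    ∃ g : G.E → ZMod 2 × ZMod 2, G.IsFlow g ∧ (∀ x ∉ C, g x = 0 ↔ f x = 0) ∧
      ∃ l ≠ 0, (q : ℤ) ≤ |signedCount e g l n| := by
  classical
  have hnext : ∀ i < n, ∀ r, i < r → r ≤ n → G.IsBranch C (v r) → ∃ k, i < k ∧ k ≤ r ∧
      G.IsBranch C (v k) ∧ ∀ m, i < m → m < k → ¬ G.IsBranch C (v m) := by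
    intro i hi r hir hr hb
    have hex : ∃ k, i < k ∧ G.IsBranch C (v k) := ⟨r, hir, hb⟩
    exact ⟨Nat.find hex, (Nat.find_spec hex).1, Nat.find_min' hex ⟨hir, hb⟩,
      (Nat.find_spec hex).2, fun m him hm hbm => Nat.find_min hex hm ⟨him, hbm⟩⟩
  by_contra hcon
  have hlt : ∀ g : G.E → ZMod 2 × ZMod 2, G.IsFlow g → (∀ x ∉ C, g x = 0 ↔ f x = 0) →
      ∀ l ≠ 0, |signedCount e g l n| < q := fun g hg hgf l hl =>
    lt_of_not_ge fun h => hcon ⟨g, hg, hgf, l, hl, h⟩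
  obtain ⟨⟨g, l, ⟨j, hj⟩⟩, ⟨hg, hgf, hl⟩, hmax⟩ := Set.exists_max_image
    {s : (G.E → ZMod 2 × ZMod 2) × (ZMod 2 × ZMod 2) × Fin (n + 1) |
      G.IsFlow s.1 ∧ (∀ x ∉ C, s.1 x = 0 ↔ f x = 0) ∧ s.2.1 ≠ 0}
    (fun s => |signedCount e s.1 s.2.1 s.2.2|) (Set.toFinite _)
    ⟨(f, (1, 0), 0), hf, fun _ _ => Iff.rfl, (by decide : ((1, 0) : ZMod 2 × ZMod 2) ≠ 0)⟩
  dsimp only at hg hgf hl hmax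
  obtain ⟨ε, hε, hεM⟩ : ∃ ε : ℤ, (ε = 1 ∨ ε = -1) ∧
      ε * signedCount e g l j = |signedCount e g l j| := by
    rcases abs_choice (signedCount e g l j) with h | h
    · exact ⟨1, Or.inl rfl, by rw [h, one_mul]⟩
    · exact ⟨-1, Or.inr rfl, by rw [h, neg_one_mul]⟩
  set M := |signedCount e g l j| with hM
  have habs : ∀ z : ℤ, ε * z ≤ |z| := fun z => by
    rcases hε with rfl | rfl
    · rw [one_mul]
      exact le_abs_self z
    · rw [neg_one_mul]
      exact neg_le_abs z
  have hle : ∀ g' : G.E → ZMod 2 × ZMod 2, G.IsFlow g' → (∀ x ∉ C, g' x = 0 ↔ f x = 0) →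
      ∀ k ≤ n, |signedCount e g' l k| ≤ M := fun g' hg' hgf' k hk =>
    hmax (g', l, ⟨k, by omega⟩) ⟨hg', hgf', hl⟩
  have hsgn : ∀ a : ZMod 2, ε * sgn a = 1 ∨ ε * sgn a = -1 := fun a => by
    rcases hε with rfl | rfl <;> rcases sgn_eq_one_or a with h | h <;> rw [h] <;> simp
  have hqM : (q : ℤ) ≤ M ∧ 1 ≤ M := by
    obtain ⟨k, hk0, hkn, hbk, hno⟩ := hnext 0 hn n hn le_rfl (O.closed ▸ h0)
    have h1 := hrun 0 k hk0 hkn h0 hbk hno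
    have h2 := O.signedCount_run hg l hk0.le hkn hno
    have h3 := hle g hg hgf k hkn
    have h4 : |signedCount e g l k| = k := by
      rw [h2]
      rcases sgn_eq_one_or (dot l (g (e 0))) with h | h <;> simp [h, signedCount]
    omega
  obtain ⟨i, rfl⟩ : ∃ i, j = i + 1 := by
    refine Nat.exists_eq_succ_of_ne_zero ?_
    rintro rfl
    simp only [signedCount, Finset.range_zero, Finset.sum_empty, abs_zero] at hM
    omega
  have hin : i + 1 < n := by
    rcases Nat.lt_or_ge (i + 1) n with h | h
    · exact h
    · have := hlt g hg hgf l hl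
      rw [show n = i + 1 by omega] at this
      omega
  have hs0 : ε * sgn (dot l (g (e i))) = 1 := by
    have h1 := (habs _).trans (hle g hg hgf i (by omega))
    rw [signedCount_succ, mul_add] at hεM
    rcases hsgn (dot l (g (e i))) with h | h
    · exact h
    · omega
  have hs1 : ε * sgn (dot l (g (e (i + 1)))) = -1 := by
    have h1 := (habs _).trans (hle g hg hgf (i + 1 + 1) (by omega))
    rw [signedCount_succ, mul_add] at h1
    rcases hsgn (dot l (g (e (i + 1)))) with h | h
    · omega
    · exact h
  obtain ⟨k, hkn, hki, hbk, hbi, g', hg', hgg', hflip⟩ := O.exists_switch hg hin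
    (dot_add_eq_one fun h => by rw [h] at hs0; omega)
  have hgf' : ∀ x ∉ C, g' x = 0 ↔ f x = 0 := fun x hx => (hgg' x hx).trans (hgf x hx)
  obtain ⟨hflip1, hflip2⟩ := sum_flip hflip
  change ∀ r, min k (i + 1) ≤ r → r ≤ max k (i + 1) → r ≤ n →
    signedCount e g' l r =
      2 * signedCount e g l (min k (i + 1)) - signedCount e g l r at hflip1
  change ∀ r, min k (i + 1) ≤ max k (i + 1) → max k (i + 1) ≤ r → r ≤ n →
    signedCount e g' l r = signedCount e g l r - 2 * (signedCount e g l (max k (i + 1)) -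
      signedCount e g l (min k (i + 1))) at hflip2
  rcases lt_or_gt_of_ne hki with hki | hki
  · rw [min_eq_left hki.le, max_eq_right hki.le] at hflip1 hflip2
    obtain ⟨r, hkr, hri, hbr, hno⟩ := hnext k hkn (i + 1) hki hin.le hbi
    have h1 := hrun k r hkr (by omega) hbk hbr hno
    have h2 := congrArg (ε * ·) (O.signedCount_run hg l hkr.le (by omega) hno)
    have h3 := (habs _).trans (hle g hg hgf r (by omega))
    have h4 := (habs _).trans (hle g' hg' hgf' r (by omega))
    have h5 := abs_lt.1 (hlt g hg hgf l hl)
    have h6 := abs_lt.1 (hlt g' hg' hgf' l hl)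
    rw [hflip2 n hki.le hin.le le_rfl] at h6
    rw [hflip1 r hkr.le hri (by omega)] at h4
    have h7 : M - q < ε * signedCount e g l k := by
      rcases hε with rfl | rfl <;> omega
    simp only [mul_add, ← mul_assoc] at h2
    rw [mul_sub, mul_left_comm] at h4
    rcases hsgn (dot l (g (e k))) with h | h <;> rw [h] at h2 <;> omega
  · rw [min_eq_right hki.le, max_eq_left hki.le] at hflip1
    have h1 := (habs _).trans (hle g' hg' hgf' (i + 1 + 1) (by omega))
    rw [hflip1 _ (by omega) (by omega) (by omega), signedCount_succ e g l (i + 1)] at h1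
    have h2 : ε * (2 * signedCount e g l (i + 1) -
        (signedCount e g l (i + 1) + sgn (dot l (g (e (i + 1)))))) =
        ε * signedCount e g l (i + 1) - ε * sgn (dot l (g (e (i + 1)))) := by ring
    omega

end CyclicOrder

theorem IsCircuit.exists_flow {C : Set G.E} (hC : G.IsCircuit C) {q : ℕ}
    (hthread : ∀ x ∈ C, ∃ m, q ≤ m ∧ ∃ W : G.Walk m, G.IsDeg2Path W ∧ x ∈ Set.range W.edge)
    {f : G.E → ZMod 2 × ZMod 2} (hf : G.IsFlow f) :
    ∃ g : G.E → ZMod 2 × ZMod 2, G.IsFlow g ∧ (∀ x ∉ C, g x = 0 ↔ f x = 0) ∧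
      4 * {x ∈ C | g x = 0}.ncard + q ≤ C.ncard := by
  have hloop : ∀ x ∈ C, ¬ (G.ends x).IsDiag := by
    intro x hx
    obtain ⟨m, -, W, hW, hxW⟩ := hthread x hx
    exact hW.not_isDiag hxW
  have hclosed : ∀ B : Set G.E, B.Nonempty → B ⊆ C →
      (∀ b ∈ B, ∀ a ∈ G.ends b, ¬ G.IsBranch C a → ∀ y ∈ C, a ∈ G.ends y → y ∈ B) →
      q ≤ B.ncard := by
    rintro B ⟨x, hx⟩ hBC hB
    obtain ⟨m, hqm, W, hW, hxW⟩ := hthread x (hBC hx)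
    refine hqm.trans (hW.le_ncard hxW hx fun b hb a ha hd y hy => ?_)
    have hna := hC.not_isBranch ⟨b, hBC hb, ha⟩ hd
    exact hB b hb a ha hna y (by_contra fun h => hna ⟨y, h, hy⟩) hy
  suffices ∃ n v e, IsCyclicOrder C n v e ∧ ∃ g : G.E → ZMod 2 × ZMod 2, G.IsFlow g ∧
      (∀ x ∉ C, g x = 0 ↔ f x = 0) ∧ ∃ l ≠ 0, (q : ℤ) ≤ |signedCount e g l n| by
    obtain ⟨n, v, e, O, g, hg, hgf, l, hl, hq⟩ := this
    obtain ⟨g', hg', hgg', h⟩ := O.exists_of_le_signedCount hg hl hq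
    exact ⟨g', hg', fun x hx => by rw [hgg' x hx, hgf x hx], O.ncard_eq ▸ h⟩
  by_cases hbr : ∃ x, (∃ y ∈ C, x ∈ G.ends y) ∧ G.IsBranch C x
  · obtain ⟨x, hx, hbx⟩ := hbr
    obtain ⟨n, v, e, O, rfl⟩ := hC.exists_isCyclicOrder hloop hx
    have hn : 0 < n := by
      obtain ⟨y, hy, -⟩ := hx
      obtain ⟨i, hi, -⟩ := (O.mem_iff y).1 hy
      omega
    refine ⟨n, v, e, O, O.exists_le_signedCount hn hbx (fun i k hik hk hbi hbk hno => ?_) hf⟩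
    have himage : (e '' Finset.Ico i k).ncard = k - i := by
      rw [O.ncard_image _ fun m hm => (Finset.mem_Ico.1 hm).2.trans_le hk, Nat.card_Ico]
    have hq := hclosed (e '' Finset.Ico i k)
      ⟨e i, i, Finset.mem_coe.2 (Finset.mem_Ico.2 ⟨le_rfl, hik⟩), rfl⟩ ?_ ?_
    · omega
    · rintro _ ⟨m, hm, rfl⟩
      exact O.mem ((Finset.mem_Ico.1 hm).2.trans_le hk)
    · rintro _ ⟨m, hm, rfl⟩ a ha hna y hy hay
      have him := Finset.mem_Ico.1 hm
      obtain ⟨s, hs, hsk, rfl⟩ : ∃ s, i ≤ s ∧ s + 1 < k ∧ v (s + 1) = a := by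
        rw [O.ends m (by omega), Sym2.mem_iff] at ha
        rcases ha with rfl | rfl
        · have : m ≠ i := fun h => hna (h ▸ hbi)
          exact ⟨m - 1, by omega, by omega, by congr 1; omega⟩
        · have : m + 1 ≠ k := fun h => hna (h ▸ hbk)
          exact ⟨m, by omega, by omega, rfl⟩
      obtain ⟨r, hr, rfl⟩ := (O.mem_iff y).1 hy
      refine ⟨r, Finset.mem_coe.2 (Finset.mem_Ico.2 ?_), rfl⟩
      rcases O.eq_of_mem (by omega) hr hay with rfl | rfl <;> omega
  · obtain ⟨x, hx⟩ := hC.1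
    obtain ⟨⟨a, b⟩, hab⟩ := Quot.exists_rep (G.ends x)
    obtain ⟨n, v, e, O, -⟩ := hC.exists_isCyclicOrder hloop
      ⟨x, hx, (congrArg (a ∈ ·) hab).mp (Sym2.mem_mk_left a b)⟩
    have hq := hclosed C ⟨x, hx⟩ subset_rfl fun _ _ _ _ _ y hy _ => hy
    rw [O.ncard_eq] at hq
    have hrun := O.signedCount_run hf (1, 0) (Nat.zero_le n) le_rfl fun m _ hm hb =>
      hbr ⟨v m, ⟨e m, O.mem hm, O.mem_left hm⟩, hb⟩
    refine ⟨n, v, e, O, f, hf, fun _ _ => Iff.rfl, (1, 0), by decide, ?_⟩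
    rw [hrun]
    rcases sgn_eq_one_or (dot (1, 0) (f (e 0))) with h | h <;>
      simpa [h, signedCount] using hq

end Multigraph

open Multigraph in
/-- Lemma 2.1.  If `C` is a circuit of `G`, each edge of `C`
lies on a thread of `G` of length at least `q`, and `f` is a `ℤ₂×ℤ₂`-flow on
`G`, then there is a `ℤ₂×ℤ₂`-flow `g` on `G` with
`supp f − E(C) = supp g − E(C)` and `|E_{g=(0,0)}(C)| ≤ (|E(C)| − q)/4`. -/
theorem circuit_flow_zero_edges (G : Multigraph) (C : Set G.E) (q : ℕ)
    (hC : G.IsCircuit C)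
    (hthread : ∀ e ∈ C, ∃ n : ℕ, q ≤ n ∧ ∃ W : G.Walk n,
      G.IsThread W ∧ e ∈ Set.range W.edge)
    (f : G.E → ZMod 2 × ZMod 2) (hf : G.IsFlow f) :
    ∃ g : G.E → ZMod 2 × ZMod 2, G.IsFlow g ∧
      G.supp f \ C = G.supp g \ C ∧
      ({e ∈ C | g e = (0, 0)}.ncard : ℝ) ≤ (1 / 4) * ((C.ncard : ℝ) - (q : ℝ)) := by
  obtain ⟨g, hg, hgf, h⟩ := hC.exists_flow (fun x hx => by
    obtain ⟨m, hm, W, hW, hxW⟩ := hthread x hx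
    exact ⟨m, hm, W, hW.1, hxW⟩) hf
  refine ⟨g, hg, ?_, ?_⟩
  · ext x
    simp only [supp, Set.mem_sdiff, and_congr_left_iff]
    exact fun hx => not_congr (hgf x hx).symm
  · have h' : (4 * ({x ∈ C | g x = 0}.ncard : ℝ) + q) ≤ C.ncard := by exact_mod_cast h
    change ({x ∈ C | g x = 0}.ncard : ℝ) ≤ _
    linarith
end

section
/- Let G be a graph and C a circuit in G. If the contracted graph G/C admits a nowhere-zero 4-flow, then G admits a 4-flow f such that E(G) − E(C) ⊆ supp(f) and |E_{f=0}(C)| < (1/4)|E(C)|. (This confirms a conjecture of Fan.) -/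
open Classical in
/-- A word over signed letters whose labels do not cross and whose signs cancel
label by label is trivial in every group. -/
theorem List.prod_eq_one_of_noncrossing {κ H : Type*} [Group H] (x : κ → H) (n : ℕ) :
    ∀ L : List (κ × Bool), L.length ≤ n →
      (∀ a b, [a, b, a, b].Sublist (L.map Prod.fst) → a = b) →
      (∀ k, L.count (k, true) = L.count (k, false)) →
      (L.map fun p => if p.2 then x p.1 else (x p.1)⁻¹).prod = 1 := by
  induction n with
  | zero =>
    intro L hL _ _
    obtain rfl : L = [] := List.eq_nil_of_length_eq_zero (by omega)
    simp
  | succ n ih =>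
    intro L hL hcross hcount
    have hopp : ∀ k b, (k, b) ∈ L → (k, !b) ∈ L := by
      intro k b h
      have h1 := List.count_pos_iff.2 h
      have h2 := hcount k
      rw [← List.count_pos_iff]
      cases b
      · rw [Bool.not_false, h2]
        exact h1
      · rw [Bool.not_true, ← h2]
        exact h1
    have hsub : ∀ (P : List (κ × Bool)) {T R : List (κ × Bool)} (a : κ × Bool),
        T.Sublist R → (a :: T).Sublist (P ++ a :: R) := fun P _ _ a h =>
      (h.cons_cons a).trans (List.sublist_append_right _ _)
    have key : ∀ m : ℕ, ∀ P M Q : List (κ × Bool), ∀ k b, M.length ≤ m →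
        L = P ++ (k, b) :: M ++ (k, !b) :: Q →
        ∃ P' Q' : List (κ × Bool), ∃ k b, L = P' ++ (k, b) :: (k, !b) :: Q' := by
      intro m
      induction m with
      | zero =>
        intro P M Q k b hM h
        obtain rfl : M = [] := List.eq_nil_of_length_eq_zero (by omega)
        exact ⟨P, Q, k, b, by simpa using h⟩
      | succ m ihm =>
        intro P M Q k b hM h
        rcases M with _ | ⟨⟨l, d⟩, M⟩
        · exact ⟨P, Q, k, b, by simpa using h⟩
        simp only [List.length_cons] at hM
        by_cases hl : l = k
        · subst hl
          by_cases hd : d = b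
          · subst hd
            exact ihm (P ++ [(l, d)]) M Q l d (by omega) (by simpa using h)
          · obtain rfl : d = !b := Bool.eq_not.2 hd
            exact ⟨P, M ++ (l, !b) :: Q, l, b, by simpa using h⟩
        · have hm : (l, !d) ∈ L := hopp l d (by rw [h]; simp)
          rw [h] at hm
          simp only [List.mem_append, List.mem_cons, Prod.mk.injEq, hl, false_and,
            false_or] at hm
          rcases hm with (hm | hm | hm) | hm
          · refine absurd (hcross l k ?_) hl
            obtain ⟨P1, P2, rfl⟩ := List.append_of_mem hm
            have : [(l, !d), (k, b), (l, d), (k, !b)].Sublist L := by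
              rw [h]
              simp only [List.append_assoc, List.cons_append]
              exact hsub P1 _ (hsub P2 _ (hsub [] _ (hsub M _ (List.nil_sublist _))))
            exact this.map Prod.fst
          · exact absurd hm.2 (Bool.not_ne_self d)
          · obtain ⟨M1, M2, rfl⟩ := List.append_of_mem hm
            refine ihm (P ++ [(k, b)]) M1 (M2 ++ (k, !b) :: Q) l d ?_ ?_
            · rw [List.length_append] at hM
              omega
            · rw [h]
              simp only [List.append_assoc, List.cons_append, List.nil_append]
          · refine absurd (hcross k l ?_).symm hl
            obtain ⟨P1, P2, rfl⟩ := List.append_of_mem hm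
            have : [(k, b), (l, d), (k, !b), (l, !d)].Sublist L := by
              rw [h]
              simp only [List.append_assoc, List.cons_append]
              exact hsub P _ (hsub [] _ (hsub M _ (hsub P1 _ (List.nil_sublist _))))
            exact this.map Prod.fst
    rcases L with _ | ⟨⟨k, b⟩, L'⟩
    · simp
    have hm : (k, !b) ∈ L' := by
      have := hopp k b (by simp)
      simpa using this
    obtain ⟨M, Q, hMQ⟩ := List.append_of_mem hm
    obtain ⟨P', Q', l, d, hL'⟩ := key M.length [] M Q k b le_rfl (by simp [hMQ])
    rw [hL'] at hL hcross hcount ⊢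
    have := ih (P' ++ Q') (by simp at hL ⊢; omega)
      (fun a c h => hcross a c (h.trans (by
        apply List.Sublist.map
        refine (List.Sublist.refl _).append ?_
        exact ((List.Sublist.refl _).cons _).cons _)))
      (fun m => by
        have := hcount m
        by_cases hm : l = m <;> cases d <;>
          simp [List.count_append, hm] at this ⊢ <;> omega)
    rw [← this]
    cases d <;> simp

/-- An endomorphism of a free group that moves every generator to another one
fixes only the identity. -/
theorem FreeGroup.eq_one_of_map_eq_self {α : Type*} (s : α → α) (hs : Function.Injective s)
    (hne : ∀ a, s a ≠ a) (w : FreeGroup α) (h : FreeGroup.map s w = w) : w = 1 := by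
  classical
  have hr : FreeGroup.IsReduced (w.toWord.map fun p => (s p.1, p.2)) := by
    have := FreeGroup.isReduced_toWord (x := w)
    unfold FreeGroup.IsReduced at this ⊢
    rw [List.isChain_map]
    exact this.imp fun a b hab h => hab (hs h)
  have hw : w.toWord.map (fun p => (s p.1, p.2)) = w.toWord := by
    conv_rhs => rw [← h, ← FreeGroup.mk_toWord (x := w), FreeGroup.map.mk,
      FreeGroup.toWord_mk]
    exact hr.reduce_eq.symm
  rw [← FreeGroup.toWord_eq_nil_iff]
  rcases hL : w.toWord with _ | ⟨a, L⟩
  · rfl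
  · rw [hL] at hw
    simp only [List.map_cons, List.cons.injEq] at hw
    exact absurd (congrArg Prod.fst hw.1) (hne _)

/-- The sign `±1` of an element of `ZMod 2`. -/
def ZMod.twoSign (a : ZMod 2) : ℤ := if a = 0 then 1 else -1

theorem ZMod.twoSign_add_one (a : ZMod 2) : (a + 1).twoSign = -a.twoSign := by
  revert a; decide

/-- The letter of the free group of rank two attached to an element of `ZMod 2 × ZMod 2`:
the second coordinate selects the generator, the first one its sign. -/
def kleinLetter (a : ZMod 2 × ZMod 2) : FreeGroup (ZMod 2) :=
  if a.1 = 0 then FreeGroup.of a.2 else (FreeGroup.of a.2)⁻¹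

/-- The product of the letters of the first `n` values of `w`. -/
def kleinWord (w : ℕ → ZMod 2 × ZMod 2) (n : ℕ) : FreeGroup (ZMod 2) :=
  ((List.range n).map fun t => kleinLetter (w t)).prod

theorem kleinWord_succ (w : ℕ → ZMod 2 × ZMod 2) (n : ℕ) :
    kleinWord w (n + 1) = kleinWord w n * kleinLetter (w n) := by
  simp [kleinWord, List.range_succ]

open Classical in
theorem List.count_sub_count_map_range {κ : Type*} (g : ℕ → κ × Bool) (k : κ) (n : ℕ) :
    (((List.range n).map g).count (k, true) : ℤ) - ((List.range n).map g).count (k, false) =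
      ∑ t ∈ Finset.range n, if (g t).1 = k then (if (g t).2 then 1 else -1) else 0 := by
  induction n with
  | zero => simp
  | succ n ih =>
    rw [Finset.sum_range_succ, ← ih, List.range_succ, List.map_append]
    rcases hg : g n with ⟨l, d⟩
    by_cases h : l = k <;> cases d <;> simp [hg, h] <;> ring

section Switching

variable {F : Type*} {N : ℕ} {φ : F → ℕ → ZMod 2 × ZMod 2} {R : F → ℕ → ℕ → Prop}

open Classical in
theorem sum_twoSign_eq_zero_of_switching
    (hflip : ∀ f i j, i < j → j < N → R f i j → ∃ f', R f' = R f ∧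
      ∀ t < N, φ f' t = φ f t + if i ≤ t ∧ t < j then (1, 0) else 0)
    (hbal : ∀ f, ∑ t ∈ Finset.range N, (φ f t).1.twoSign = 0)
    (f : F) (S : Set (ℕ × ℕ)) (J : Finset (ℕ × ℕ))
    (hJ : ∀ p ∈ J, p.1 < p.2 ∧ p.2 < N ∧ R f p.1 p.2) :
    ∀ f', R f' = R f → ∑ t ∈ Finset.range N,
      (if ∀ p ∈ J, (p.1 ≤ t ∧ t < p.2 ↔ p ∈ S) then (φ f' t).1.twoSign else 0) = 0 := by
  induction J using Finset.induction_on with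
  | empty => intro f' _; simpa using hbal f'
  | insert p J hp ih =>
    intro f' hf'
    have ih' := ih fun q hq => hJ q (Finset.mem_insert_of_mem hq)
    obtain ⟨h1, h2, h3⟩ := hJ p (Finset.mem_insert_self _ _)
    obtain ⟨f'', hR, hφ⟩ := hflip f' p.1 p.2 h1 h2 (by rw [hf']; exact h3)
    have e1 := ih' f' hf'
    have e2 := ih' f'' (hR.trans hf')
    have hsign : ∀ t < N, (φ f'' t).1.twoSign =
        if p.1 ≤ t ∧ t < p.2 then -(φ f' t).1.twoSign else (φ f' t).1.twoSign := by
      intro t ht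
      rw [hφ t ht]
      split_ifs
      · exact ZMod.twoSign_add_one _
      · simp
    by_cases hS : p ∈ S
    · have h : 2 * (∑ t ∈ Finset.range N, (if ∀ q ∈ insert p J,
          (q.1 ≤ t ∧ t < q.2 ↔ q ∈ S) then (φ f' t).1.twoSign else 0)) =
          (∑ t ∈ Finset.range N, (if ∀ q ∈ J,
            (q.1 ≤ t ∧ t < q.2 ↔ q ∈ S) then (φ f' t).1.twoSign else 0)) -
          ∑ t ∈ Finset.range N, (if ∀ q ∈ J,
            (q.1 ≤ t ∧ t < q.2 ↔ q ∈ S) then (φ f'' t).1.twoSign else 0) := by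
        rw [← Finset.sum_sub_distrib, Finset.mul_sum]
        refine Finset.sum_congr rfl fun t ht => ?_
        rw [hsign t (Finset.mem_range.1 ht)]
        simp only [Finset.forall_mem_insert]
        split_ifs <;> first | ring1 | (exfalso; tauto)
      omega
    · have h : 2 * (∑ t ∈ Finset.range N, (if ∀ q ∈ insert p J,
          (q.1 ≤ t ∧ t < q.2 ↔ q ∈ S) then (φ f' t).1.twoSign else 0)) =
          (∑ t ∈ Finset.range N, (if ∀ q ∈ J,
            (q.1 ≤ t ∧ t < q.2 ↔ q ∈ S) then (φ f' t).1.twoSign else 0)) +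
          ∑ t ∈ Finset.range N, (if ∀ q ∈ J,
            (q.1 ≤ t ∧ t < q.2 ↔ q ∈ S) then (φ f'' t).1.twoSign else 0) := by
        rw [← Finset.sum_add_distrib, Finset.mul_sum]
        refine Finset.sum_congr rfl fun t ht => ?_
        rw [hsign t (Finset.mem_range.1 ht)]
        simp only [Finset.forall_mem_insert]
        split_ifs <;> first | ring1 | (exfalso; tauto)
      omega

theorem kleinWord_eq_one_of_switching
    (hflip : ∀ f i j, i < j → j < N → R f i j → ∃ f', R f' = R f ∧
      ∀ t < N, φ f' t = φ f t + if i ≤ t ∧ t < j then (1, 0) else 0)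
    (hsymm : ∀ f i j, R f i j → R f j i)
    (hcut : ∀ f i j, i < j → j < N →
      (∀ t s, i < t → t ≤ j → s < N → (s ≤ i ∨ j < s) → ¬ R f t s) → (φ f i).2 = (φ f j).2)
    (hbal : ∀ f, ∑ t ∈ Finset.range N, (φ f t).1.twoSign = 0) (f : F) :
    kleinWord (φ f) N = 1 := by
  classical
  set A : ℕ → Set (ℕ × ℕ) := fun t => {p | p.1 < p.2 ∧ p.2 < N ∧ R f p.1 p.2 ∧ p.1 ≤ t ∧ t < p.2}
    with hA
  have hmono' : ∀ i j, i < j → j < N → A i = A j → (φ f i).2 = (φ f j).2 := by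
    intro i j hij hj h
    refine hcut f i j hij hj ?_
    intro t s hit htj hs hsij hR
    rcases hsij with hsi | hjs
    · have h1 : (s, t) ∈ A i := ⟨by simp; omega, by simp; omega, hsymm _ _ _ hR, hsi, hit⟩
      rw [h] at h1
      have := h1.2.2.2.2
      simp at this; omega
    · have h1 : (t, s) ∈ A j := ⟨by simp; omega, hs, hR, htj, hjs⟩
      rw [← h] at h1
      have := h1.2.2.2.1
      simp at this; omega
  have hmono : ∀ i j, i < N → j < N → A i = A j → (φ f i).2 = (φ f j).2 := by
    intro i j hi hj h
    rcases lt_trichotomy i j with h' | rfl | h'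
    · exact hmono' i j h' hj h
    · rfl
    · exact (hmono' j i h' hi h.symm).symm
  set g : ℕ → (Set (ℕ × ℕ) × ZMod 2) × Bool :=
    fun t => ((A t, (φ f t).2), decide ((φ f t).1 = 0)) with hg
  have hword : kleinWord (φ f) N = (((List.range N).map g).map fun p =>
      if p.2 then FreeGroup.of p.1.2 else (FreeGroup.of p.1.2)⁻¹).prod := by
    simp [kleinWord, kleinLetter, hg, Function.comp_def]
  rw [hword]
  refine List.prod_eq_one_of_noncrossing
    (fun k : Set (ℕ × ℕ) × ZMod 2 => FreeGroup.of k.2) _ ((List.range N).map g) le_rfl ?_ ?_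
  · intro a b hab
    rw [List.map_map] at hab
    obtain ⟨l, hl, hab⟩ := List.sublist_map_iff.1 hab
    have hsort : l.Pairwise (· < ·) := List.Pairwise.sublist hl List.pairwise_lt_range
    have hmem : ∀ t ∈ l, t < N := fun t ht => List.mem_range.1 (hl.subset ht)
    obtain ⟨i, j, k, m, rfl⟩ : ∃ i j k m, l = [i, j, k, m] := by
      have hlen := congrArg List.length hab
      rcases l with _ | ⟨i, _ | ⟨j, _ | ⟨k, _ | ⟨m, _ | ⟨n, l⟩⟩⟩⟩⟩ <;> simp at hlen
      exact ⟨i, j, k, m, rfl⟩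
    simp only [List.map_cons, List.map_nil, List.cons.injEq, Function.comp_apply, hg,
      and_true] at hab
    obtain ⟨rfl, rfl, h1, h2⟩ := hab
    simp only [List.pairwise_cons, List.mem_cons, List.not_mem_nil, or_false,
      forall_eq_or_imp, forall_eq] at hsort hmem
    simp only [Prod.mk.injEq] at h1 h2
    have hAij : A i = A j := by
      ext p
      have e1 := Set.ext_iff.1 h1.1 p
      have e2 := Set.ext_iff.1 h2.1 p
      simp only [hA, Set.mem_ofPred_eq] at e1 e2 ⊢
      constructor
      · intro hp
        have := e1.1 hp
        refine ⟨hp.1, hp.2.1, hp.2.2.1, ?_, ?_⟩ <;> omega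
      · intro hp
        have := e2.1 hp
        refine (e1.2 ⟨hp.1, hp.2.1, hp.2.2.1, ?_, ?_⟩) <;> omega
    exact Prod.ext hAij (hmono i j (by omega) (by omega) hAij)
  · intro k
    have := List.count_sub_count_map_range g k N
    rw [← Int.natCast_inj, ← sub_eq_zero, this]
    by_cases hk : ∃ t₀ < N, (g t₀).1 = k
    · obtain ⟨t₀, ht₀, rfl⟩ := hk
      have := sum_twoSign_eq_zero_of_switching hflip hbal f (A t₀)
        ((Finset.range N ×ˢ Finset.range N).filter fun p => p.1 < p.2 ∧ p.2 < N ∧ R f p.1 p.2)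
        (fun p hp => (Finset.mem_filter.1 hp).2) f rfl
      refine Eq.trans ?_ this
      refine Finset.sum_congr rfl fun t ht => ?_
      rw [Finset.mem_range] at ht
      have hiff : (g t).1 = (g t₀).1 ↔ ∀ p ∈ (Finset.range N ×ˢ Finset.range N).filter
          (fun p => p.1 < p.2 ∧ p.2 < N ∧ R f p.1 p.2), (p.1 ≤ t ∧ t < p.2 ↔ p ∈ A t₀) := by
        have h1 : (g t).1 = (g t₀).1 ↔ A t = A t₀ := by
          simp only [hg, Prod.mk.injEq]
          exact ⟨fun h => h.1, fun h => ⟨h, hmono _ _ ht ht₀ h⟩⟩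
        rw [h1, Set.ext_iff]
        simp only [hA, Finset.mem_filter, Finset.mem_product, Finset.mem_range, Set.mem_ofPred_eq]
        constructor
        · intro h p hp
          have := h p
          tauto
        · intro h p
          constructor
          · intro hp
            exact (h p ⟨⟨by omega, by omega⟩, hp.1, hp.2.1, hp.2.2.1⟩).1 hp.2.2.2
          · intro hp
            exact ⟨hp.1, hp.2.1, hp.2.2.1,
              (h p ⟨⟨by omega, by omega⟩, hp.1, hp.2.1, hp.2.2.1⟩).2 hp⟩
      simp only [hiff]
      simp [hg, ZMod.twoSign]
    · refine Finset.sum_eq_zero fun t ht => if_neg fun h => hk ⟨t, Finset.mem_range.1 ht, h⟩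

end Switching

theorem kleinWord_congr {w w' : ℕ → ZMod 2 × ZMod 2} (τ : FreeGroup (ZMod 2) →* FreeGroup (ZMod 2))
    (a b : ℕ) (hab : a ≤ b)
    (h : ∀ t, a ≤ t → t < b → kleinLetter (w' t) = τ (kleinLetter (w t))) :
    (kleinWord w' a)⁻¹ * kleinWord w' b = τ ((kleinWord w a)⁻¹ * kleinWord w b) := by
  induction b, hab using Nat.le_induction with
  | base => simp
  | succ b hab ih =>
    rw [kleinWord_succ, kleinWord_succ, ← mul_assoc, ← mul_assoc, map_mul,
      ih fun t h1 h2 => h t h1 (by omega), h b hab (by omega)]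

theorem kleinLetter_add_snd (a : ZMod 2 × ZMod 2) :
    kleinLetter (a + (0, 1)) = FreeGroup.map (· + 1) (kleinLetter a) := by
  unfold kleinLetter
  by_cases h : a.1 = 0 <;> simp [h]

theorem kleinWord_ne_of_fst_eq {w : ℕ → ZMod 2 × ZMod 2} {r s : ℕ} (hrs : r < s) (x : ZMod 2)
    (h : ∀ t, r ≤ t → t < s → (w t).1 = x) : kleinWord w r ≠ kleinWord w s := by
  have key : ∀ s, r ≤ s → (∀ t, r ≤ t → t < s → (w t).1 = x) →
      (FreeGroup.lift (fun _ : ZMod 2 => Multiplicative.ofAdd (1 : ℤ)) (kleinWord w s)).toAdd =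
      (FreeGroup.lift (fun _ : ZMod 2 => Multiplicative.ofAdd (1 : ℤ)) (kleinWord w r)).toAdd +
        ((s : ℤ) - r) * x.twoSign := by
    intro s hrs
    induction s, hrs using Nat.le_induction with
    | base => simp
    | succ s hrs ih =>
      intro h
      rw [kleinWord_succ, map_mul, toAdd_mul, ih fun t h1 h2 => h t h1 (by omega), add_assoc]
      congr 1
      have hx : (FreeGroup.lift (fun _ : ZMod 2 => Multiplicative.ofAdd (1 : ℤ))
          (kleinLetter (w s))).toAdd = x.twoSign := by
        unfold kleinLetter ZMod.twoSign
        rw [h s hrs (by omega)]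
        split_ifs <;> simp
      rw [hx]
      push_cast
      ring
  intro he
  have := key s hrs.le h
  rw [he] at this
  have hx : x.twoSign ≠ 0 := by
    unfold ZMod.twoSign
    split_ifs <;> norm_num
  have h0 : ((s : ℤ) - r) ≠ 0 := by omega
  exact mul_ne_zero h0 hx (by linarith)

/-- Two families of switchings, one for each coordinate, are incompatible with all the words being
balanced in the first coordinate. -/
theorem isEmpty_of_switching {F : Type*} {N : ℕ} (hN : 0 < N) {φ : F → ℕ → ZMod 2 × ZMod 2}
    {R₁ R₂ : F → ℕ → ℕ → Prop}
    (hflip₁ : ∀ f i j, i < j → j < N → R₁ f i j → ∃ f', R₁ f' = R₁ f ∧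
      ∀ t < N, φ f' t = φ f t + if i ≤ t ∧ t < j then (1, 0) else 0)
    (hflip₂ : ∀ f i j, i < j → j < N → R₂ f i j → ∃ f', R₂ f' = R₂ f ∧
      ∀ t < N, φ f' t = φ f t + if i ≤ t ∧ t < j then (0, 1) else 0)
    (hsymm₁ : ∀ f i j, R₁ f i j → R₁ f j i)
    (hsymm₂ : ∀ f i j, R₂ f i j → R₂ f j i)
    (hcut₁ : ∀ f i j, i < j → j < N →
      (∀ t s, i < t → t ≤ j → s < N → (s ≤ i ∨ j < s) → ¬ R₁ f t s) → (φ f i).2 = (φ f j).2)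
    (hcut₂ : ∀ f i j, i < j → j < N →
      (∀ t s, i < t → t ≤ j → s < N → (s ≤ i ∨ j < s) → ¬ R₂ f t s) → (φ f i).1 = (φ f j).1)
    (hbal : ∀ f, ∑ t ∈ Finset.range N, (φ f t).1.twoSign = 0) :
    IsEmpty F := by
  classical
  refine ⟨fun f => ?_⟩
  have hone : ∀ f, kleinWord (φ f) N = 1 := fun f =>
    kleinWord_eq_one_of_switching hflip₁ hsymm₁ hcut₁ hbal f
  set σ : FreeGroup (ZMod 2) →* FreeGroup (ZMod 2) := FreeGroup.map (· + 1) with hσ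
  have hfix : ∀ w, σ w = w → w = 1 := fun w hw =>
    FreeGroup.eq_one_of_map_eq_self _ (add_left_injective 1) (by decide) w hw
  have hswitch : ∀ f i j, i < j → j < N → R₂ f i j → ∃ f', R₂ f' = R₂ f ∧
      (∀ n ≤ i, kleinWord (φ f') n = kleinWord (φ f) n) ∧
      (∀ n, i ≤ n → n ≤ j → kleinWord (φ f') n =
        kleinWord (φ f) i * σ ((kleinWord (φ f) i)⁻¹ * kleinWord (φ f) n)) ∧
      (∀ n, j ≤ n → n ≤ N → kleinWord (φ f') n =
        kleinWord (φ f') j * ((kleinWord (φ f) j)⁻¹ * kleinWord (φ f) n)) := by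
    intro f i j hij hj hR
    obtain ⟨f', hR', hφ⟩ := hflip₂ f i j hij hj hR
    have h1 : ∀ n ≤ i, kleinWord (φ f') n = kleinWord (φ f) n := by
      intro n hn
      have := kleinWord_congr (w := φ f) (w' := φ f') (MonoidHom.id _) 0 n (by omega) (by
        intro t _ h2
        rw [hφ t (by omega), if_neg (by omega), add_zero]
        rfl)
      simpa [kleinWord] using this
    refine ⟨f', hR', h1, ?_, ?_⟩
    · intro n h2 h3
      rw [← kleinWord_congr (w := φ f) (w' := φ f') σ i n h2, h1 i le_rfl, mul_inv_cancel_left]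
      intro t h4 h5
      rw [hφ t (by omega), if_pos (by omega), kleinLetter_add_snd]
    · intro n h2 h3
      have := kleinWord_congr (w := φ f) (w' := φ f') (MonoidHom.id _) j n h2 (by
        intro t h4 h5
        rw [hφ t (by omega), if_neg (by omega), add_zero]
        rfl)
      rw [MonoidHom.id_apply] at this
      rw [← this, mul_inv_cancel_left]
  have heq : ∀ f i j, i < j → j < N → R₂ f i j → kleinWord (φ f) i = kleinWord (φ f) j := by
    intro f i j hij hj hR
    obtain ⟨f', -, -, h2, h3⟩ := hswitch f i j hij hj hR
    have h4 := h3 N hj.le le_rfl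
    rw [hone, hone, h2 j hij.le le_rfl, mul_one, eq_comm, mul_inv_eq_one] at h4
    have h5 := hfix ((kleinWord (φ f) i)⁻¹ * kleinWord (φ f) j)
      (by rw [eq_inv_mul_iff_mul_eq]; exact h4)
    exact inv_mul_eq_one.1 h5
  have hpartner : ∀ r, 0 < r → r < N → (φ f (r - 1)).1 ≠ (φ f r).1 →
      ∃ s < N, s ≠ r ∧ R₂ f r s := by
    intro r hr hrN hne
    by_contra! hno
    refine hne (hcut₂ f (r - 1) r (by omega) hrN ?_)
    intro t s h1 h2 h3 h4
    obtain rfl : t = r := by omega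
    exact hno s h3 (by omega)
  have hexists : ∃ d, ∃ i j, i < j ∧ j < N ∧ R₂ f i j ∧ j - i = d := by
    obtain ⟨r, hr, hrN, hne⟩ : ∃ r, 0 < r ∧ r < N ∧ (φ f (r - 1)).1 ≠ (φ f r).1 := by
      by_contra! hno
      have hconst : ∀ t, t < N → (φ f t).1 = (φ f 0).1 := by
        intro t
        induction t with
        | zero => intro _; rfl
        | succ t ih =>
          intro ht
          rw [← ih (by omega), ← hno (t + 1) (by omega) ht]
          simp
      refine kleinWord_ne_of_fst_eq hN _ (fun t _ ht => hconst t ht) ?_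
      rw [hone]
      simp [kleinWord]
    obtain ⟨s, hs, hne, hR⟩ := hpartner r hr hrN hne
    rcases lt_or_gt_of_ne hne with h | h
    · exact ⟨_, s, r, h, hrN, hsymm₂ _ _ _ hR, rfl⟩
    · exact ⟨_, r, s, h, hs, hR, rfl⟩
  obtain ⟨t, s, hts, hs, hR, hd⟩ := Nat.find_spec hexists
  have hmin : ∀ i j, i < j → j < N → R₂ f i j → s - t ≤ j - i := by
    intro i j h1 h2 h3
    rw [hd]
    exact Nat.find_min' hexists ⟨i, j, h1, h2, h3, rfl⟩
  have hrun : ∃ r, t ≤ r ∧ r < s ∧ ∀ q, r ≤ q → q < s → (φ f q).1 = (φ f (s - 1)).1 :=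
    ⟨s - 1, by omega, by omega, fun q h1 h2 => by rw [show q = s - 1 by omega]⟩
  obtain ⟨h1, h2, h3⟩ := Nat.find_spec hrun
  have h4 : ∀ q < Nat.find hrun, _ := fun q hq => Nat.find_min hrun hq
  set r := Nat.find hrun
  have hts' := heq f t s hts hs hR
  have hne := kleinWord_ne_of_fst_eq h2 _ h3
  rcases eq_or_lt_of_le h1 with h1 | h1
  · exact hne (h1 ▸ hts')
  have hchange : (φ f (r - 1)).1 ≠ (φ f r).1 := by
    intro he
    refine h4 (r - 1) (by omega) ⟨by omega, by omega, fun q hq1 hq2 => ?_⟩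
    by_cases hq : q = r - 1
    · rw [hq, he]
      exact h3 r le_rfl h2
    · exact h3 q (by omega) hq2
  obtain ⟨r', hr', hrr, hRr⟩ := hpartner r (by omega) (by omega) hchange
  have hout : r' < t ∨ s < r' := by
    by_contra! hin
    rcases lt_or_gt_of_ne hrr with h | h
    · have := hmin r' r h (by omega) (hsymm₂ _ _ _ hRr)
      omega
    · have := hmin r r' h hr' hRr
      omega
  rcases hout with hout | hout
  · obtain ⟨f', hRf, -, g2, g3⟩ := hswitch f r' r (by omega) (by omega) (hsymm₂ _ _ _ hRr)
    have e := heq f' t s hts hs (by rw [hRf]; exact hR)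
    rw [g3 s h2.le hs.le, g2 r (by omega) le_rfl, g2 t (by omega) (by omega), mul_assoc,
      mul_right_inj, ← inv_mul_eq_iff_eq_mul, ← map_inv, ← map_mul, ← hts'] at e
    have hg : ((kleinWord (φ f) r')⁻¹ * kleinWord (φ f) r)⁻¹ *
        ((kleinWord (φ f) r')⁻¹ * kleinWord (φ f) t) =
          (kleinWord (φ f) r)⁻¹ * kleinWord (φ f) t := by group
    rw [hg] at e
    have e' := hfix _ e
    rw [inv_mul_eq_one] at e'
    exact hne (e'.trans hts')
  · obtain ⟨f', hRf, g1, g2, -⟩ := hswitch f r r' (by omega) (by omega) hRr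
    have e := heq f' t s hts hs (by rw [hRf]; exact hR)
    rw [g1 t h1.le, g2 s h2.le hout.le, hts', ← inv_mul_eq_iff_eq_mul] at e
    exact hne (inv_mul_eq_one.1 (hfix _ e.symm))

section Boundary

open Classical in
/-- The incidence of a vertex with an unordered pair, modulo two: a loop is incident with
nothing. -/
noncomputable def Sym2.bd {V : Type*} (z : Sym2 V) (w : V) : ZMod 2 :=
  Sym2.lift ⟨fun a b => (if a = w then 1 else 0) + (if b = w then 1 else 0),
    fun _ _ => add_comm _ _⟩ z

open Classical in
theorem Sym2.bd_mk {V : Type*} (a b w : V) :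
    s(a, b).bd w = (if a = w then 1 else 0) + (if b = w then 1 else 0) := rfl

open Classical in
/-- An edge set of even degree everywhere can be oriented so that it is balanced. -/
theorem exists_balanced_signs {V E : Type*} (n : ℕ) :
    ∀ (X : Finset E) (D : E → V × V), X.card = n →
      (∀ v, ∑ e ∈ X, s((D e).1, (D e).2).bd v = 0) →
      ∃ k : E → ℤ, (∀ e ∈ X, k e = 1 ∨ k e = -1) ∧
        ∀ v, ∑ e ∈ X, k e * ((if (D e).1 = v then 1 else 0) - (if (D e).2 = v then 1 else 0)) =
          0 := by
  induction n with
  | zero =>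
    intro X D hX _
    rw [Finset.card_eq_zero] at hX
    exact ⟨fun _ => 1, by simp [hX], by simp [hX]⟩
  | succ n ih =>
    intro X D hX hv
    obtain ⟨e₀, he₀⟩ : X.Nonempty := Finset.card_pos.1 (by omega)
    by_cases hloop : (D e₀).1 = (D e₀).2
    · obtain ⟨k, hk, hkv⟩ := ih (X.erase e₀) D (by rw [Finset.card_erase_of_mem he₀]; omega) (by
        intro v
        rw [← hv v, ← Finset.add_sum_erase _ _ he₀, Sym2.bd_mk, hloop, CharTwo.add_self_eq_zero,
          zero_add])
      refine ⟨Function.update k e₀ 1, fun e he => ?_, fun v => ?_⟩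
      · by_cases h : e = e₀
        · simp [h]
        · rw [Function.update_of_ne h]
          exact hk e (Finset.mem_erase.2 ⟨h, he⟩)
      · rw [← Finset.add_sum_erase _ _ he₀, hloop, sub_self, mul_zero, zero_add]
        refine (Finset.sum_congr rfl fun e he => ?_).trans (hkv v)
        rw [Function.update_of_ne (Finset.ne_of_mem_erase he)]
    · obtain ⟨e₁, he₁, hne, h⟩ : ∃ e₁ ∈ X, e₁ ≠ e₀ ∧
          ((D e₁).1 = (D e₀).1 ∨ (D e₁).2 = (D e₀).1) := by
        by_contra! hcon
        have h := hv (D e₀).1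
        rw [← Finset.add_sum_erase _ _ he₀, Finset.sum_eq_zero, Sym2.bd_mk, if_pos rfl,
          if_neg (Ne.symm hloop)] at h
        · exact absurd h (by decide)
        · intro e he
          obtain ⟨h1, h2⟩ := Finset.mem_erase.1 he
          rw [Sym2.bd_mk, if_neg (hcon e h2 h1).1, if_neg (hcon e h2 h1).2, add_zero]
      set Y := (X.erase e₀).erase e₁
      have h₁X : e₁ ∈ X.erase e₀ := Finset.mem_erase.2 ⟨hne, he₁⟩
      have h₀Y : e₀ ∉ Y := by simp [Y]
      obtain ⟨b, s, hs, hb2, hbd⟩ : ∃ (b : V) (s : ℤ), (s = 1 ∨ s = -1) ∧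
          (∀ v, s((D e₁).1, (D e₁).2).bd v = s((D e₀).1, b).bd v) ∧
          ∀ v, (if (D e₁).1 = v then (1 : ℤ) else 0) - (if (D e₁).2 = v then 1 else 0) =
            s * ((if (D e₀).1 = v then 1 else 0) - (if b = v then 1 else 0)) := by
        rcases h with h | h
        · exact ⟨(D e₁).2, 1, Or.inl rfl, by simp [h], by simp [h]⟩
        · exact ⟨(D e₁).1, -1, Or.inr rfl, by simp [h, Sym2.eq_swap], by simp [h]⟩
      set D' := Function.update D e₀ ((D e₀).2, b) with hD'
      have hD'Y : ∀ e ∈ Y, D' e = D e := fun e he =>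
        Function.update_of_ne (ne_of_mem_of_not_mem he h₀Y) _ _
      have hD'₀ : D' e₀ = ((D e₀).2, b) := Function.update_self ..
      obtain ⟨k, hk, hkv⟩ := ih (insert e₀ Y) D' (by
          rw [Finset.card_insert_of_notMem h₀Y, Finset.card_erase_of_mem h₁X,
            Finset.card_erase_of_mem he₀]
          have := Finset.card_pos.2 ⟨e₁, h₁X⟩
          rw [Finset.card_erase_of_mem he₀] at this
          omega) (by
        intro v
        have h := hv v
        rw [← Finset.add_sum_erase _ _ he₀, ← Finset.add_sum_erase _ _ h₁X, hb2] at h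
        rw [Finset.sum_insert h₀Y, hD'₀, ← h, Finset.sum_congr rfl fun e he => by rw [hD'Y e he],
          ← add_assoc]
        congr 1
        simp only [Sym2.bd_mk]
        have := CharTwo.add_self_eq_zero (if (D e₀).1 = v then (1 : ZMod 2) else 0)
        linear_combination -this)
      refine ⟨Function.update (Function.update k e₁ (s * k e₀)) e₀ (-k e₀), fun e he => ?_,
        fun v => ?_⟩
      · by_cases h0 : e = e₀
        · have := hk e₀ (Finset.mem_insert_self _ _)
          simp only [h0, Function.update_self]
          omega
        · rw [Function.update_of_ne h0]
          by_cases h1 : e = e₁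
          · have := hk e₀ (Finset.mem_insert_self _ _)
            simp only [h1, Function.update_self]
            rcases hs with rfl | rfl <;> omega
          · rw [Function.update_of_ne h1]
            exact hk e (Finset.mem_insert_of_mem
              (Finset.mem_erase.2 ⟨h1, Finset.mem_erase.2 ⟨h0, he⟩⟩))
      · have h := hkv v
        rw [Finset.sum_insert h₀Y, hD'₀, Finset.sum_congr rfl fun e he => by rw [hD'Y e he]] at h
        refine Eq.trans ?_ h
        rw [← Finset.add_sum_erase _ _ he₀, ← Finset.add_sum_erase _ _ h₁X,
          Function.update_self, Function.update_of_ne hne, Function.update_self, hbd, ← add_assoc]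
        congr 1
        · have hss : s * s = 1 := by rcases hs with rfl | rfl <;> rfl
          linear_combination (k e₀ * ((if (D e₀).1 = v then 1 else 0) -
            (if b = v then 1 else 0))) * hss
        · refine Finset.sum_congr rfl fun e he => ?_
          rw [Function.update_of_ne (ne_of_mem_of_not_mem he h₀Y),
            Function.update_of_ne (Finset.ne_of_mem_erase he)]


open Classical in
theorem finsum_mem_eq_iff_sum_mul_eq_zero {V E : Type*} [Fintype E] (D : E → V × V) (f : E → ℤ)
    (v : V) :
    (∑ᶠ e ∈ {e : E | (D e).1 = v}, f e) = ∑ᶠ e ∈ {e : E | (D e).2 = v}, f e ↔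
      ∑ e, f e * ((if (D e).1 = v then 1 else 0) - (if (D e).2 = v then 1 else 0)) = 0 := by
  have h : ∀ P : E → Prop, ∑ᶠ e ∈ {e : E | P e}, f e = ∑ e, if P e then f e else 0 := fun P => by
    rw [finsum_mem_def, finsum_eq_sum_of_fintype]
    exact Finset.sum_congr rfl fun e _ => by simp [Set.indicator_apply]
  simp only [h, mul_sub, Finset.sum_sub_distrib, mul_ite, mul_one, mul_zero]
  exact sub_eq_zero.symm

open Classical in
theorem Sym2.bd_eq_intCast {V : Type*} (a b v : V) :
    s(a, b).bd v = (((if a = v then 1 else 0) - (if b = v then 1 else 0) : ℤ) : ZMod 2) := by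
  rw [Sym2.bd_mk]
  split_ifs <;> decide

open Classical in
/-- Tutte: a nowhere-zero integer `4`-flow yields a nowhere-zero flow with values in the
Klein four-group. -/
theorem exists_klein_flow_of_int_flow {V E : Type*} [Fintype E] (D : E → V × V) (f : E → ℤ)
    (hf : ∀ e, |f e| < 4) (h0 : ∀ e, f e ≠ 0)
    (hv : ∀ v, ∑ e, f e * ((if (D e).1 = v then 1 else 0) - (if (D e).2 = v then 1 else 0)) = 0) :
    ∃ g : E → ZMod 2 × ZMod 2, (∀ e, g e ≠ 0) ∧
      ∀ v, ∑ e, s((D e).1, (D e).2).bd v • g e = 0 := by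
  have hv2 : ∀ v, ∑ e, (f e : ZMod 2) * s((D e).1, (D e).2).bd v = 0 := by
    intro v
    have := congrArg (Int.cast : ℤ → ZMod 2) (hv v)
    rw [Int.cast_zero, Int.cast_sum] at this
    rw [← this]
    exact Finset.sum_congr rfl fun e _ => by rw [Int.cast_mul, Sym2.bd_eq_intCast]
  obtain ⟨k, hk, hkv⟩ := exists_balanced_signs _ (Finset.univ.filter fun e => Odd (f e)) D rfl (by
    intro v
    rw [← hv2 v, Finset.sum_filter]
    refine Finset.sum_congr rfl fun e _ => ?_
    split_ifs with h
    · rw [(ZMod.intCast_eq_one_iff_odd).2 h, one_mul]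
    · rw [(ZMod.intCast_eq_zero_iff_even).2 (Int.not_odd_iff_even.1 h), zero_mul])
  have hh : ∀ e, ∃ h : ℤ, f e + (if Odd (f e) then k e else 0) = 2 * h := by
    intro e
    split_ifs with h
    · have := hk e (by simpa using h)
      obtain ⟨m, hm⟩ := h
      rcases this with h | h
      · exact ⟨m + 1, by omega⟩
      · exact ⟨m, by omega⟩
    · obtain ⟨m, hm⟩ := Int.not_odd_iff_even.1 h
      exact ⟨m, by omega⟩
  choose h hh using hh
  have hhv : ∀ v, ∑ e, h e * ((if (D e).1 = v then 1 else 0) - (if (D e).2 = v then 1 else 0)) =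
      0 := by
    intro v
    have h2 : 2 * ∑ e, h e * ((if (D e).1 = v then 1 else 0) - (if (D e).2 = v then 1 else 0)) =
        0 := by
      rw [Finset.mul_sum]
      have := congrArg₂ (· + ·) (hv v) (hkv v)
      simp only [Finset.sum_filter, ← Finset.sum_add_distrib] at this
      refine Eq.trans (Finset.sum_congr rfl fun e _ => ?_) this
      rw [← mul_assoc, ← hh e]
      split_ifs <;> ring
    omega
  refine ⟨fun e => (f e, h e), fun e he => ?_, fun v => ?_⟩
  · obtain ⟨h1, h2⟩ := Prod.ext_iff.1 he
    simp only [Prod.fst_zero, Prod.snd_zero, ZMod.intCast_eq_zero_iff_even] at h1 h2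
    have h3 := hh e
    rw [if_neg (Int.not_odd_iff_even.2 h1)] at h3
    obtain ⟨m, hm⟩ := h2
    have h4 := abs_lt.1 (hf e)
    have := h0 e
    omega
  · have := congrArg (Int.cast : ℤ → ZMod 2) (hhv v)
    rw [Int.cast_zero, Int.cast_sum] at this
    refine Prod.ext ?_ ?_
    · rw [Prod.fst_sum, Prod.fst_zero, ← hv2 v]
      exact Finset.sum_congr rfl fun e _ => by rw [Prod.smul_fst, smul_eq_mul, mul_comm]
    · rw [Prod.snd_sum, Prod.snd_zero, ← this]
      exact Finset.sum_congr rfl fun e _ => by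
        rw [Prod.smul_snd, smul_eq_mul, mul_comm, Sym2.bd_eq_intCast, Int.cast_mul]

open Classical in
/-- Tutte: a flow with values in the Klein four-group lifts to an integer `4`-flow. -/
theorem exists_int_flow_of_klein_flow {V E : Type*} [Fintype E] (D : E → V × V)
    (g : E → ZMod 2 × ZMod 2) (hg : ∀ v, ∑ e, s((D e).1, (D e).2).bd v • g e = 0) :
    ∃ f : E → ℤ, (∀ e, |f e| < 4) ∧ (∀ e, f e = 0 ↔ g e = 0) ∧
      ∀ v, ∑ e, f e * ((if (D e).1 = v then 1 else 0) - (if (D e).2 = v then 1 else 0)) = 0 := by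
  have hq : ∀ q : ZMod 2 × ZMod 2 →ₗ[ZMod 2] ZMod 2, ∃ k : E → ℤ,
      (∀ e, q (g e) = 0 ∧ k e = 0 ∨ q (g e) ≠ 0 ∧ (k e = 1 ∨ k e = -1)) ∧
      ∀ v, ∑ e, k e * ((if (D e).1 = v then 1 else 0) - (if (D e).2 = v then 1 else 0)) = 0 := by
    intro q
    obtain ⟨k, hk, hkv⟩ := exists_balanced_signs _ (Finset.univ.filter fun e => q (g e) ≠ 0) D rfl
      (by
        intro v
        have := congrArg q (hg v)
        rw [map_sum, map_zero] at this
        rw [Finset.sum_filter]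
        refine (Finset.sum_congr rfl fun e _ => ?_).trans this
        rw [map_smul, smul_eq_mul]
        split_ifs with h
        · have h1 : ∀ a : ZMod 2, a ≠ 0 → a = 1 := by decide
          rw [h1 _ h, mul_one]
        · rw [not_not.1 h, mul_zero])
    refine ⟨fun e => if q (g e) ≠ 0 then k e else 0, fun e => ?_, fun v => ?_⟩
    · by_cases h : q (g e) = 0
      · simp [h]
      · simpa [h] using hk e (by simpa using h)
    · refine Eq.trans ?_ (hkv v)
      rw [Finset.sum_filter]
      exact Finset.sum_congr rfl fun e _ => by rw [ite_mul, zero_mul]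
  obtain ⟨k₁, hk₁, hv₁⟩ := hq (LinearMap.fst _ _ _)
  obtain ⟨k₂, hk₂, hv₂⟩ := hq (LinearMap.snd _ _ _)
  simp only [LinearMap.fst_apply, LinearMap.snd_apply] at hk₁ hk₂
  refine ⟨fun e => k₁ e + 2 * k₂ e, fun e => ?_, fun e => ?_, fun v => ?_⟩
  · have := hk₁ e
    have := hk₂ e
    rw [abs_lt]
    dsimp only
    omega
  · rw [Prod.ext_iff, Prod.fst_zero, Prod.snd_zero]
    dsimp only
    rcases hk₁ e with ⟨h1, h1'⟩ | ⟨h1, h1'⟩ <;> rcases hk₂ e with ⟨h2, h2'⟩ | ⟨h2, h2'⟩ <;>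
      simp only [h1, h2, and_true, and_false, iff_true, iff_false] <;> omega
  · simp only [add_mul, Finset.sum_add_distrib, hv₁, mul_assoc, ← Finset.mul_sum, hv₂]
    rfl

end Boundary

section Ring

/-- The vertices `v 0, …, v (N - 1)` and the edges `a 0, …, a (N - 1)` form a closed path. -/
structure IsRing {V E : Type*} (ends : E → Sym2 V) (N : ℕ) (v : ℕ → V) (a : ℕ → E) : Prop where
  pos : 0 < N
  closed : v N = v 0
  vtx_inj : ∀ i < N, ∀ j < N, v i = v j → i = j
  edge_inj : ∀ i < N, ∀ j < N, a i = a j → i = j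
  ends_eq : ∀ i < N, ends (a i) = s(v i, v (i + 1))

open Classical in
theorem IsRing.sum_eq {V E M : Type*} [Fintype E] [AddCommMonoid M] {ends : E → Sym2 V} {N : ℕ}
    {v : ℕ → V} {a : ℕ → E} (h : IsRing ends N v a) (F : E → M) :
    ∑ x, F x = ∑ x with ∀ t < N, a t ≠ x, F x + ∑ t ∈ Finset.range N, F (a t) := by
  rw [← Finset.sum_filter_add_sum_filter_not Finset.univ (fun x => ∀ t < N, a t ≠ x)]
  congr 1
  have : Finset.univ.filter (fun x => ¬ ∀ t < N, a t ≠ x) = (Finset.range N).image a := by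
    ext x
    simp
  rw [this, Finset.sum_image]
  intro i hi j hj hij
  exact h.edge_inj i (by simpa using hi) j (by simpa using hj) hij

open Classical in
theorem IsRing.sum_bd {V E M : Type*} [AddCommGroup M] [Module (ZMod 2) M] {ends : E → Sym2 V}
    {N : ℕ} {v : ℕ → V} {a : ℕ → E} (h : IsRing ends N v a) (ψ : ℕ → M) (hψ : ψ N = ψ 0) (w : V) :
    ∑ t ∈ Finset.range N, (ends (a t)).bd w • ψ (t + 1) =
      ∑ t ∈ Finset.range N, if v t = w then ψ t + ψ (t + 1) else 0 := by
  have h1 : ∑ t ∈ Finset.range N, (if v (t + 1) = w then ψ (t + 1) else 0) =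
      ∑ t ∈ Finset.range N, if v t = w then ψ t else 0 := by
    have := (Finset.sum_range_succ' (fun t => if v t = w then ψ t else 0) N).symm.trans
      (Finset.sum_range_succ (fun t => if v t = w then ψ t else 0) N)
    rw [h.closed, hψ] at this
    exact add_right_cancel this
  have h2 : ∀ t, (if v t = w then ψ t + ψ (t + 1) else 0) =
      (if v t = w then ψ t else 0) + if v t = w then ψ (t + 1) else 0 := fun t => by
    split_ifs <;> simp
  simp only [h2, Finset.sum_add_distrib]
  rw [← h1, ← Finset.sum_add_distrib]
  refine Finset.sum_congr rfl fun t ht => ?_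
  rw [h.ends_eq t (Finset.mem_range.1 ht), Sym2.bd_mk, add_smul, add_comm]
  simp only [ite_smul, one_smul, zero_smul]

/-- A flow with values in the Klein four-group which is nonzero away from the ring. -/
def IsGoodFlow {V E : Type*} [Fintype E] (ends : E → Sym2 V) (N : ℕ) (a : ℕ → E)
    (f : E → ZMod 2 × ZMod 2) : Prop :=
  (∀ w, ∑ x, (ends x).bd w • f x = 0) ∧ ∀ x, (∀ t < N, a t ≠ x) → f x ≠ 0

open Classical in
/-- Prescribed values off the ring extend to a flow as soon as the resulting excess vanishes
off the ring and has total zero on it. -/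
theorem IsRing.exists_isGoodFlow {V E : Type*} [Fintype E] {ends : E → Sym2 V} {N : ℕ} {v : ℕ → V}
    {a : ℕ → E} (h : IsRing ends N v a) (g : E → ZMod 2 × ZMod 2)
    (hg : ∀ x, (∀ t < N, a t ≠ x) → g x ≠ 0)
    (hoff : ∀ w, (∀ t < N, v t ≠ w) →
      ∑ x with ∀ t < N, a t ≠ x, (ends x).bd w • g x = 0)
    (hon : ∑ t ∈ Finset.range N, ∑ x with ∀ t < N, a t ≠ x, (ends x).bd (v t) • g x = 0) :
    ∃ f, IsGoodFlow ends N a f := by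
  set D : V → ZMod 2 × ZMod 2 := fun w => ∑ x with ∀ t < N, a t ≠ x, (ends x).bd w • g x with hD
  set ψ : ℕ → ZMod 2 × ZMod 2 := fun t => ∑ s ∈ Finset.range t, D (v s) with hψ
  set f : E → ZMod 2 × ZMod 2 := fun x =>
    if hx : ∃ t < N, a t = x then ψ (hx.choose + 1) else g x with hf
  have hfa : ∀ t < N, f (a t) = ψ (t + 1) := by
    intro t ht
    have hx : ∃ s < N, a s = a t := ⟨t, ht, rfl⟩
    rw [hf]
    dsimp only
    rw [dif_pos hx, h.edge_inj _ hx.choose_spec.1 _ ht hx.choose_spec.2]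
  have hfg : ∀ x, (∀ t < N, a t ≠ x) → f x = g x := fun x hx => dif_neg (by push Not; exact hx)
  refine ⟨f, fun w => ?_, fun x hx => by rw [hfg x hx]; exact hg x hx⟩
  rw [h.sum_eq, Finset.sum_congr rfl fun x hx => by rw [hfg x (Finset.mem_filter.1 hx).2],
    Finset.sum_congr (s₁ := Finset.range N) rfl fun t ht => by rw [hfa t (Finset.mem_range.1 ht)],
    h.sum_bd ψ (hon.trans (Finset.sum_range_zero _).symm)]
  have hstep : ∀ t, ψ t + ψ (t + 1) = D (v t) := fun t => by
    rw [hψ]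
    dsimp only
    rw [Finset.sum_range_succ, ← add_assoc, CharTwo.add_self_eq_zero, zero_add]
  simp only [hstep]
  by_cases hw : ∃ t < N, v t = w
  · obtain ⟨s, hs, rfl⟩ := hw
    rw [Finset.sum_eq_single s]
    · rw [if_pos rfl]
      exact CharTwo.add_self_eq_zero _
    · intro t ht hts
      exact if_neg fun hv => hts (h.vtx_inj _ (Finset.mem_range.1 ht) _ hs hv)
    · intro hs'
      exact absurd (Finset.mem_range.2 hs) hs'
  · push Not at hw
    rw [hoff w hw, zero_add]
    exact Finset.sum_eq_zero fun t ht => if_neg (hw t (Finset.mem_range.1 ht))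

open Classical in
/-- The value of an arc of a ring as a chain modulo two. -/
theorem IsRing.sum_bd_arc {V E : Type*} {ends : E → Sym2 V} {N : ℕ} {v : ℕ → V} {a : ℕ → E}
    (h : IsRing ends N v a) {i j : ℕ} (hij : i < j) (hj : j < N) (w : V) :
    ∑ t ∈ Finset.range N, (ends (a t)).bd w * (if i ≤ t ∧ t < j then 1 else 0) =
      s(v i, v j).bd w := by
  have h1 := h.sum_bd (fun t => if i < t ∧ t ≤ j then (1 : ZMod 2) else 0)
    (by rw [if_neg (by omega), if_neg (by omega)]) w
  simp only [smul_eq_mul, Nat.lt_add_one_iff, Nat.add_one_le_iff] at h1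
  rw [h1, Sym2.bd_mk]
  have h2 : ∀ t, (if v t = w then (if i < t ∧ t ≤ j then (1 : ZMod 2) else 0) +
      (if i ≤ t ∧ t < j then 1 else 0) else 0) =
      (if i = t then (if v t = w then 1 else 0) else 0) +
        (if j = t then (if v t = w then 1 else 0) else 0) := by
    intro t
    rcases lt_trichotomy t i with ht | ht | ht
    · simp [show ¬ i < t by omega, show ¬ i ≤ t by omega, show i ≠ t by omega,
        show j ≠ t by omega]
    · subst ht
      simp [hij, hij.ne']
    · rcases lt_trichotomy t j with ht' | ht' | ht'
      · simp [ht, ht.le, ht', ht'.le, ht.ne, ht'.ne', CharTwo.add_self_eq_zero]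
      · subst ht'
        simp [ht, ht.ne]
      · simp [show ¬ t < j by omega, show ¬ t ≤ j by omega, show i ≠ t by omega,
          show j ≠ t by omega]
  simp only [h2, Finset.sum_add_distrib, Finset.sum_ite_eq, Finset.mem_range, hj, hij.trans hj,
    if_true]


/-- Two vertices are joined by a walk with edges in `M`. -/
def EdgeJoined {V E : Type*} (ends : E → Sym2 V) (M : Set E) : V → V → Prop :=
  Relation.ReflTransGen fun p q => ∃ x ∈ M, ends x = s(p, q)

theorem EdgeJoined.symm {V E : Type*} {ends : E → Sym2 V} {M : Set E} {u w : V}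
    (h : EdgeJoined ends M u w) : EdgeJoined ends M w u := by
  induction h with
  | refl => exact Relation.ReflTransGen.refl
  | tail _ hbc ih =>
    obtain ⟨x, hx, hxe⟩ := hbc
    exact Relation.ReflTransGen.head ⟨x, hx, hxe.trans Sym2.eq_swap⟩ ih

open Classical in
theorem EdgeJoined.exists_chain {V E : Type*} [Fintype E] {ends : E → Sym2 V} {M : Set E} {u w : V}
    (h : EdgeJoined ends M u w) :
    ∃ P : E → ZMod 2, (∀ x, x ∉ M → P x = 0) ∧
      ∀ y, ∑ x, (ends x).bd y * P x = s(u, w).bd y := by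
  induction h with
  | refl => exact ⟨0, fun _ _ => rfl, fun y => by simp [Sym2.bd_mk, CharTwo.add_self_eq_zero]⟩
  | @tail b c _ hbc ih =>
    obtain ⟨P, hP, hPy⟩ := ih
    obtain ⟨x, hx, hxe⟩ := hbc
    refine ⟨P + Pi.single x 1, fun y hy => ?_, fun y => ?_⟩
    · rw [Pi.add_apply, hP y hy, Pi.single_eq_of_ne (ne_of_mem_of_not_mem hx hy).symm, add_zero]
    · simp only [Pi.add_apply, mul_add, Finset.sum_add_distrib, hPy, Pi.single_apply, mul_ite,
        mul_one, mul_zero, Finset.sum_ite_eq', Finset.mem_univ, if_true, hxe, Sym2.bd_mk]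
      have := CharTwo.add_self_eq_zero (if b = y then (1 : ZMod 2) else 0)
      linear_combination this

/-- The edges away from the ring on which `q ∘ f` does not vanish. -/
def offRing {E : Type*} (N : ℕ) (a : ℕ → E) (q : ZMod 2 × ZMod 2 →ₗ[ZMod 2] ZMod 2)
    (f : E → ZMod 2 × ZMod 2) : Set E := {x | (∀ t < N, a t ≠ x) ∧ q (f x) ≠ 0}

open Classical in
theorem IsRing.exists_switch {V E : Type*} [Fintype E] {ends : E → Sym2 V} {N : ℕ} {v : ℕ → V}
    {a : ℕ → E} (h : IsRing ends N v a) (q : ZMod 2 × ZMod 2 →ₗ[ZMod 2] ZMod 2)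
    (c : ZMod 2 × ZMod 2) (hqc : q c = 0) {f : E → ZMod 2 × ZMod 2} (hf : IsGoodFlow ends N a f)
    {i j : ℕ} (hij : i < j) (hj : j < N) (hR : EdgeJoined ends (offRing N a q f) (v i) (v j)) :
    ∃ f', IsGoodFlow ends N a f' ∧ offRing N a q f' = offRing N a q f ∧
      ∀ t < N, f' (a t) = f (a t) + if i ≤ t ∧ t < j then c else 0 := by
  obtain ⟨P, hP, hPy⟩ := hR.exists_chain
  set A : E → ZMod 2 := fun x => if ∃ t, (i ≤ t ∧ t < j) ∧ a t = x then 1 else 0 with hA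
  have hAa : ∀ t < N, A (a t) = if i ≤ t ∧ t < j then 1 else 0 := by
    intro t ht
    refine if_congr ⟨fun ⟨s, hs, hst⟩ => ?_, fun h => ⟨t, h, rfl⟩⟩ rfl rfl
    rwa [← h.edge_inj s (by omega) t ht hst]
  have hA0 : ∀ x, (∀ t < N, a t ≠ x) → A x = 0 := fun x hx =>
    if_neg fun ⟨t, ht, htx⟩ => hx t (by omega) htx
  have hq : ∀ x, q (f x + (P x + A x) • c) = q (f x) := fun x => by
    rw [map_add, map_smul, hqc, smul_zero, add_zero]
  refine ⟨fun x => f x + (P x + A x) • c, ⟨fun w => ?_, fun x hx => ?_⟩, ?_, fun t ht => ?_⟩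
  · have h1 : ∑ x, (ends x).bd w * A x = s(v i, v j).bd w := by
      rw [h.sum_eq, Finset.sum_eq_zero fun x hx => by
        rw [hA0 x (Finset.mem_filter.1 hx).2, mul_zero], zero_add, ← h.sum_bd_arc hij hj w]
      exact Finset.sum_congr rfl fun t ht => by rw [hAa t (Finset.mem_range.1 ht)]
    simp only [smul_add, Finset.sum_add_distrib, hf.1, zero_add, smul_smul, add_smul,
      ← Finset.sum_smul, h1, hPy]
    exact CharTwo.add_self_eq_zero _
  · dsimp only
    by_cases hM : x ∈ offRing N a q f
    · intro h0
      apply hM.2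
      rw [← hq x, h0, map_zero]
    · rw [hP x hM, hA0 x hx, add_zero, zero_smul, add_zero]
      exact hf.2 x hx
  · simp only [offRing, hq]
  · dsimp only
    rw [hP _ fun hM => hM.1 t ht rfl, hAa t ht, zero_add, ite_smul, one_smul, zero_smul]

open Classical in
theorem IsRing.eq_of_cut {V E : Type*} [Fintype V] [Fintype E] {ends : E → Sym2 V} {N : ℕ}
    {v : ℕ → V} {a : ℕ → E} (h : IsRing ends N v a) (q : ZMod 2 × ZMod 2 →ₗ[ZMod 2] ZMod 2)
    {f : E → ZMod 2 × ZMod 2} (hf : IsGoodFlow ends N a f) {i j : ℕ} (hij : i < j) (hj : j < N)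
    (hcut : ∀ t s, i < t → t ≤ j → s < N → (s ≤ i ∨ j < s) →
      ¬ EdgeJoined ends (offRing N a q f) (v t) (v s)) :
    q (f (a i)) = q (f (a j)) := by
  set χ : V → ZMod 2 := fun w =>
    if ∃ t, (i < t ∧ t ≤ j) ∧ EdgeJoined ends (offRing N a q f) (v t) w then 1 else 0 with hχ
  have hχv : ∀ s < N, χ (v s) = if i < s ∧ s ≤ j then 1 else 0 := by
    intro s hs
    refine if_congr ⟨fun ⟨t, ht, hts⟩ => ?_, fun hs => ⟨s, hs, Relation.ReflTransGen.refl⟩⟩ rfl rfl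
    by_contra hn
    exact hcut t s ht.1 ht.2 hs (by omega) hts
  have hχe : ∀ x ∈ offRing N a q f, ∀ p r, ends x = s(p, r) → χ p = χ r := by
    intro x hx p r hxe
    refine if_congr ⟨fun ⟨t, ht, htp⟩ => ⟨t, ht, htp.tail ⟨x, hx, hxe⟩⟩,
      fun ⟨t, ht, htp⟩ => ⟨t, ht, htp.tail ⟨x, hx, hxe.trans Sym2.eq_swap⟩⟩⟩ rfl rfl
  have hsum : ∑ x, (∑ w, χ w * (ends x).bd w) * q (f x) = 0 := by
    simp only [Finset.sum_mul]
    rw [Finset.sum_comm]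
    refine Finset.sum_eq_zero fun w _ => ?_
    have := congrArg q (hf.1 w)
    simp only [map_sum, map_smul, map_zero, smul_eq_mul] at this
    simp only [mul_assoc, ← Finset.mul_sum, this, mul_zero]
  have hδ : ∀ x p r, ends x = s(p, r) → ∑ w, χ w * (ends x).bd w = χ p + χ r := by
    intro x p r hx
    simp [hx, Sym2.bd_mk, mul_add, Finset.sum_add_distrib]
  rw [h.sum_eq, Finset.sum_eq_zero, zero_add] at hsum
  · have hterm : ∀ t ∈ Finset.range N, (∑ w, χ w * (ends (a t)).bd w) * q (f (a t)) =
        (if i = t then q (f (a t)) else 0) + if j = t then q (f (a t)) else 0 := by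
      intro t ht
      rw [Finset.mem_range] at ht
      have hnext : χ (v (t + 1)) = if i ≤ t ∧ t < j then 1 else 0 := by
        rcases Nat.lt_or_ge (t + 1) N with ht' | ht'
        · rw [hχv _ ht']
          exact if_congr (by omega) rfl rfl
        · rw [show t + 1 = N by omega, h.closed, hχv 0 h.pos, if_neg (by omega),
            if_neg (by omega)]
      rw [hδ _ _ _ (h.ends_eq t ht), hχv t ht, hnext]
      rcases lt_trichotomy t i with ht | ht | ht
      · simp [show ¬ i < t by omega, show ¬ i ≤ t by omega, show i ≠ t by omega,
          show j ≠ t by omega]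
      · subst ht
        simp [hij, hij.ne']
      · rcases lt_trichotomy t j with ht' | ht' | ht'
        · simp [ht, ht.le, ht', ht'.le, ht.ne, ht'.ne', CharTwo.add_self_eq_zero]
        · subst ht'
          simp [ht, ht.ne]
        · simp [show ¬ t < j by omega, show ¬ t ≤ j by omega, show i ≠ t by omega,
            show j ≠ t by omega]
    rw [Finset.sum_congr rfl hterm, Finset.sum_add_distrib, Finset.sum_ite_eq, Finset.sum_ite_eq,
      if_pos (Finset.mem_range.2 (hij.trans hj)), if_pos (Finset.mem_range.2 hj)] at hsum
    exact CharTwo.add_eq_zero.1 hsum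
  · intro x hx
    by_cases hM : x ∈ offRing N a q f
    · induction hxe : ends x with
      | _ p r =>
        rw [← hxe, hδ x p r hxe, hχe x hM p r hxe, CharTwo.add_self_eq_zero, zero_mul]
    · rw [not_not.1 fun hne => hM ⟨(Finset.mem_filter.1 hx).2, hne⟩, mul_zero]

open Classical in
theorem IsRing.isGoodFlow_add {V E : Type*} [Fintype E] {ends : E → Sym2 V} {N : ℕ} {v : ℕ → V}
    {a : ℕ → E} (h : IsRing ends N v a) {f : E → ZMod 2 × ZMod 2} (hf : IsGoodFlow ends N a f)
    (c : ZMod 2 × ZMod 2) :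
    ∃ f', IsGoodFlow ends N a f' ∧ ∀ t < N, f' (a t) = f (a t) + c := by
  refine ⟨fun x => f x + if ∃ t < N, a t = x then c else 0, ⟨fun w => ?_, fun x hx => ?_⟩,
    fun t ht => ?_⟩
  · simp only [smul_add, Finset.sum_add_distrib, hf.1, zero_add]
    rw [h.sum_eq, Finset.sum_eq_zero, zero_add]
    · refine Eq.trans (Finset.sum_congr rfl fun t ht => ?_) ((h.sum_bd (fun _ => c) rfl w).trans
        (Finset.sum_eq_zero fun t _ => by
          rw [show c + c = 0 from CharTwo.add_self_eq_zero c, ite_self]))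
      rw [if_pos ⟨t, Finset.mem_range.1 ht, rfl⟩]
    · intro x hx
      rw [if_neg fun ⟨t, ht, htx⟩ => (Finset.mem_filter.1 hx).2 t ht htx, smul_zero]
  · dsimp only
    rw [if_neg fun ⟨t, ht, htx⟩ => hx t ht htx, add_zero]
    exact hf.2 x hx
  · dsimp only
    rw [if_pos ⟨t, ht, rfl⟩]

theorem sum_twoSign_eq_zero_of_le_card {N : ℕ} {φ : ℕ → ZMod 2 × ZMod 2}
    (h : ∀ c, N ≤ 4 * ((Finset.range N).filter fun t => φ t = c).card) :
    ∑ t ∈ Finset.range N, (φ t).1.twoSign = 0 := by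
  have h1 := Finset.card_eq_sum_card_fiberwise (s := Finset.range N) (t := Finset.univ) (f := φ)
    (by simp)
  have h2 : ∑ t ∈ Finset.range N, (φ t).1.twoSign = ∑ c : ZMod 2 × ZMod 2,
      ((Finset.range N).filter fun t => φ t = c).card * c.1.twoSign := by
    rw [← Finset.sum_fiberwise (Finset.range N) φ]
    refine Finset.sum_congr rfl fun c _ => ?_
    rw [← nsmul_eq_mul, ← Finset.sum_const]
    exact Finset.sum_congr rfl fun t ht => by rw [(Finset.mem_filter.1 ht).2]
  have h3 : ∀ F : ZMod 2 × ZMod 2 → ℤ, ∑ c, F c = F (0, 0) + F (0, 1) + (F (1, 0) + F (1, 1)) :=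
    fun F => by
      rw [Fintype.sum_prod_type]
      exact (Fin.sum_univ_two _).trans (congrArg₂ _ (Fin.sum_univ_two _) (Fin.sum_univ_two _))
  rw [Finset.card_range] at h1
  have h4 := congrArg (Nat.cast : ℕ → ℤ) h1
  rw [Nat.cast_sum, h3] at h4
  rw [h2, h3]
  have e0 : ZMod.twoSign 0 = 1 := rfl
  have e1 : ZMod.twoSign 1 = -1 := rfl
  simp only [e0, e1]
  have := h (0, 0)
  have := h (0, 1)
  have := h (1, 0)
  have := h (1, 1)
  omega

open Classical in
/-- If a flow is nonzero away from a ring, some such flow vanishes on less than a quarter of the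
ring. -/
theorem IsRing.exists_isGoodFlow_card_lt {V E : Type*} [Fintype V] [Fintype E] {ends : E → Sym2 V}
    {N : ℕ} {v : ℕ → V} {a : ℕ → E} (h : IsRing ends N v a)
    (hne : ∃ f, IsGoodFlow ends N a f) :
    ∃ f, IsGoodFlow ends N a f ∧ 4 * ((Finset.range N).filter fun t => f (a t) = 0).card < N := by
  by_contra! hcon
  obtain ⟨f₀, hf₀⟩ := hne
  refine (isEmpty_of_switching (F := {f // IsGoodFlow ends N a f}) h.pos
    (φ := fun f t => f.1 (a t))
    (R₁ := fun f i j => EdgeJoined ends (offRing N a (LinearMap.snd _ _ _) f.1) (v i) (v j))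
    (R₂ := fun f i j => EdgeJoined ends (offRing N a (LinearMap.fst _ _ _) f.1) (v i) (v j))
    ?_ ?_ (fun _ _ _ h => h.symm) (fun _ _ _ h => h.symm) ?_ ?_ ?_).false ⟨f₀, hf₀⟩
  · intro f i j hij hj hR
    obtain ⟨f', hf', hM, ht⟩ := h.exists_switch (LinearMap.snd _ _ _) (1, 0) rfl f.2 hij hj hR
    exact ⟨⟨f', hf'⟩, by simp only [hM], ht⟩
  · intro f i j hij hj hR
    obtain ⟨f', hf', hM, ht⟩ := h.exists_switch (LinearMap.fst _ _ _) (0, 1) rfl f.2 hij hj hR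
    exact ⟨⟨f', hf'⟩, by simp only [hM], ht⟩
  · intro f i j hij hj hc
    exact h.eq_of_cut (LinearMap.snd _ _ _) f.2 hij hj hc
  · intro f i j hij hj hc
    exact h.eq_of_cut (LinearMap.fst _ _ _) f.2 hij hj hc
  · intro f
    refine sum_twoSign_eq_zero_of_le_card fun c => ?_
    obtain ⟨f', hf', ht⟩ := h.isGoodFlow_add f.2 c
    refine (hcon f' hf').trans (Nat.mul_le_mul_left _ (Finset.card_le_card fun t htm => ?_))
    rw [Finset.mem_filter, Finset.mem_range] at htm ⊢
    refine ⟨htm.1, ?_⟩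
    rw [ht t htm.1] at htm
    exact CharTwo.add_eq_zero.1 htm.2

end Ring

section Circuit

/-- A finite connected edge set in which every edge meeting a vertex has exactly one partner
there is a ring. -/
theorem exists_isRing {V E : Type*} [Finite V] {ends : E → Sym2 V} {S : Set E} (hne : S.Nonempty)
    (hthree : ∀ p, ∀ x ∈ S, ∀ y ∈ S, ∀ z ∈ S, p ∈ ends x → p ∈ ends y → p ∈ ends z →
      x = y ∨ x = z ∨ y = z)
    (htwo : ∀ p, ∀ x ∈ S, p ∈ ends x → ¬ (ends x).IsDiag →
      ∃ y ∈ S, y ≠ x ∧ p ∈ ends y ∧ ¬ (ends y).IsDiag)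
    (hone : ∀ p, ∀ x ∈ S, ∀ y ∈ S, ends x = s(p, p) → p ∈ ends y → y = x)
    (hconn : ∀ p r, (∃ x ∈ S, p ∈ ends x) → (∃ x ∈ S, r ∈ ends x) → EdgeJoined ends S p r) :
    ∃ N v a, IsRing ends N v a ∧ ∀ x, x ∈ S ↔ ∃ t < N, a t = x := by
  by_cases hloop : ∃ x ∈ S, (ends x).IsDiag
  · obtain ⟨x, hx, hd⟩ := hloop
    obtain ⟨p, hp⟩ : ∃ p, ends x = s(p, p) := by
      induction h : ends x with
      | _ p r =>
        rw [h] at hd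
        exact ⟨p, by rw [Sym2.mk_isDiag_iff.1 hd]⟩
    have hreach : ∀ r, EdgeJoined ends S p r → r = p := by
      intro r hr
      induction hr with
      | refl => rfl
      | tail _ hbc ih =>
        obtain ⟨y, hy, hye⟩ := hbc
        subst ih
        have := hone _ x hx y hy hp (by rw [hye]; exact Sym2.mem_mk_left _ _)
        subst this
        rw [hp, Sym2.eq_iff] at hye
        rcases hye with h | h
        · exact h.2.symm
        · exact h.1.symm
    refine ⟨1, fun _ => p, fun _ => x, ⟨one_pos, rfl, ?_, ?_, fun _ _ => hp⟩, fun y => ?_⟩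
    · intros; omega
    · intros; omega
    · refine ⟨fun hy => ⟨0, one_pos, ?_⟩, fun ⟨_, _, h⟩ => h ▸ hx⟩
      have hm := (ends y).out_fst_mem
      have := hreach _ (hconn p _ ⟨x, hx, by rw [hp]; exact Sym2.mem_mk_left _ _⟩ ⟨y, hy, hm⟩)
      rw [this] at hm
      exact (hone p x hx y hy hp hm).symm
  push Not at hloop
  let P : ℕ → Prop := fun k => ∃ (v : ℕ → V) (a : ℕ → E),
    (∀ i < k, a i ∈ S ∧ ends (a i) = s(v i, v (i + 1))) ∧ ∀ i ≤ k, ∀ j ≤ k, v i = v j → i = j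
  obtain ⟨k, hk1, ⟨v, a, ha, hv⟩, hk⟩ : ∃ k, 1 ≤ k ∧ P k ∧ ¬ P (k + 1) := by
    by_contra! hcon
    have hall : ∀ k, 1 ≤ k → P k := by
      intro k hk
      induction k, hk using Nat.le_induction with
      | base =>
        obtain ⟨x, hx⟩ := hne
        induction h : ends x with
        | _ p r =>
          have hpr : p ≠ r := fun hpr => hloop x hx (by rw [h]; exact hpr)
          refine ⟨fun t => if t = 0 then p else r, fun _ => x, fun i hi => ⟨hx, ?_⟩,
            fun i hi j hj hij => ?_⟩
          · obtain rfl : i = 0 := by omega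
            simpa using h
          · have : i = 0 ∨ i = 1 := by omega
            have : j = 0 ∨ j = 1 := by omega
            rcases ‹i = 0 ∨ i = 1› with rfl | rfl <;> rcases ‹j = 0 ∨ j = 1› with rfl | rfl <;>
              simp_all
      | succ k hk ih => exact hcon k hk ih
    obtain ⟨v, -, -, hv⟩ := hall (Nat.card V + 1) (by omega)
    have := Nat.card_le_card_of_injective (fun i : Fin (Nat.card V + 1) => v i) fun i j hij =>
      Fin.ext (hv _ (by omega) _ (by omega) hij)
    rw [Nat.card_fin] at this
    omega
  have hak : ends (a (k - 1)) = s(v (k - 1), v k) := by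
    rw [(ha (k - 1) (by omega)).2, Nat.sub_add_cancel hk1]
  obtain ⟨y, hy, hya, hyk, -⟩ := htwo (v k) (a (k - 1)) (ha _ (by omega)).1
    (by rw [hak]; exact Sym2.mem_mk_right _ _) (hloop _ (ha _ (by omega)).1)
  obtain ⟨w, hw⟩ := Sym2.mem_iff_exists.1 hyk
  have hcl : w = v 0 := by
    by_contra hw0
    by_cases hwv : ∃ i ≤ k, v i = w
    · obtain ⟨i, hi, rfl⟩ := hwv
      have hik : i ≠ k := fun hik => hloop y hy (by rw [hw, hik]; rfl)
      have hi0 : i ≠ 0 := fun hi0 => hw0 (by rw [hi0])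
      have e1 := (ha (i - 1) (by omega)).2
      have e2 := (ha i (by omega)).2
      rw [Nat.sub_add_cancel (by omega)] at e1
      rcases hthree (v i) _ (ha (i - 1) (by omega)).1 _ (ha i (by omega)).1 _ hy
        (by rw [e1]; exact Sym2.mem_mk_right _ _) (by rw [e2]; exact Sym2.mem_mk_left _ _)
        (by rw [hw]; exact Sym2.mem_mk_right _ _) with h | h | h
      · rw [h, e2, Sym2.eq_swap, Sym2.congr_left] at e1
        have := hv _ (by omega) _ (by omega) e1
        omega
      · rw [h, hw, Sym2.congr_left] at e1
        have := hv _ (by omega) _ (by omega) e1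
        omega
      · have e3 := e2
        rw [h, hw, Sym2.eq_swap, Sym2.congr_right] at e3
        have := hv _ (by omega) _ (by omega) e3
        exact hya (by rw [← h, this, Nat.add_sub_cancel])
    · push Not at hwv
      refine hk ⟨Function.update v (k + 1) w, Function.update a k y, fun i hi => ?_,
        fun i hi j hj hij => ?_⟩
      · rw [Function.update_of_ne (show i ≠ k + 1 by omega)]
        by_cases hik : i = k
        · subst hik
          rw [Function.update_self, Function.update_self]
          exact ⟨hy, hw⟩
        · rw [Function.update_of_ne hik, Function.update_of_ne (show i + 1 ≠ k + 1 by omega)]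
          exact ha i (by omega)
      · by_cases hi' : i = k + 1 <;> by_cases hj' : j = k + 1
        · omega
        · subst hi'
          rw [Function.update_self, Function.update_of_ne hj'] at hij
          exact absurd hij.symm (hwv j (by omega))
        · subst hj'
          rw [Function.update_self, Function.update_of_ne hi'] at hij
          exact absurd hij (hwv i (by omega))
        · rw [Function.update_of_ne hi', Function.update_of_ne hj'] at hij
          exact hv i (by omega) j (by omega) hij
  subst hcl
  have hring : IsRing ends (k + 1) (Function.update v (k + 1) (v 0)) (Function.update a k y) := by
    have hlast : ∀ i < k, a i ≠ y := by
      intro i hi h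
      have := (ha i hi).2
      rw [h, hw, Sym2.eq_iff] at this
      rcases this with ⟨h1, -⟩ | ⟨h1, -⟩
      · have := hv _ (by omega) _ (by omega) h1
        omega
      · have := hv _ (by omega) _ (by omega) h1
        exact hya (by rw [← h, this, Nat.add_sub_cancel])
    have hinj : ∀ i < k, ∀ j < k, a i = a j → i ≤ j := by
      intro i hi j hj h
      have e1 := (ha i hi).2
      rw [h, (ha j hj).2, Sym2.eq_iff] at e1
      rcases e1 with ⟨h1, -⟩ | ⟨h1, h2⟩
      · exact (hv _ (by omega) _ (by omega) h1).ge
      · have := hv _ (by omega) _ (by omega) h1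
        have := hv _ (by omega) _ (by omega) h2
        omega
    refine ⟨by omega, by rw [Function.update_self, Function.update_of_ne (by omega)],
      fun i hi j hj hij => ?_, fun i hi j hj hij => ?_, fun i hi => ?_⟩
    · rw [Function.update_of_ne (by omega), Function.update_of_ne (by omega)] at hij
      exact hv i (by omega) j (by omega) hij
    · by_cases hi' : i = k <;> by_cases hj' : j = k
      · omega
      · subst hi'
        rw [Function.update_self, Function.update_of_ne hj'] at hij
        exact absurd hij.symm (hlast j (by omega))
      · subst hj'
        rw [Function.update_self, Function.update_of_ne hi'] at hij
        exact absurd hij (hlast i (by omega))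
      · rw [Function.update_of_ne hi', Function.update_of_ne hj'] at hij
        exact le_antisymm (hinj i (by omega) j (by omega) hij)
          (hinj j (by omega) i (by omega) hij.symm)
    · rw [Function.update_of_ne (show i ≠ k + 1 by omega)]
      by_cases hik : i = k
      · subst hik
        rw [Function.update_self, Function.update_self]
        exact hw
      · rw [Function.update_of_ne hik, Function.update_of_ne (show i + 1 ≠ k + 1 by omega)]
        exact (ha i (by omega)).2
  have hS : ∀ t < k + 1, Function.update a k y t ∈ S := by
    intro t ht
    by_cases htk : t = k
    · rw [htk, Function.update_self]
      exact hy
    · rw [Function.update_of_ne htk]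
      exact (ha t (by omega)).1
  refine ⟨_, _, _, hring, fun x => ⟨fun hx => ?_, fun ⟨t, ht, h⟩ => h ▸ hS t ht⟩⟩
  generalize Function.update v (k + 1) (v 0) = v', Function.update a k y = a' at hring hS
  have hat : ∀ i < k + 1, ∀ x ∈ S, v' i ∈ ends x → ∃ t < k + 1, a' t = x := by
    intro i hi x hx hix
    obtain ⟨j, hj, hij, hji⟩ : ∃ j < k + 1, i ≠ j ∧ v' (j + 1) = v' i := by
      by_cases hi0 : i = 0
      · exact ⟨k, by omega, by omega, by rw [hi0, hring.closed]⟩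
      · exact ⟨i - 1, by omega, by omega, by rw [Nat.sub_add_cancel (by omega)]⟩
    rcases hthree (v' i) _ (hS i hi) _ (hS j hj) x hx
      (by rw [hring.ends_eq i hi]; exact Sym2.mem_mk_left _ _)
      (by rw [hring.ends_eq j hj, hji]; exact Sym2.mem_mk_right _ _) hix with h | h | h
    · exact absurd (hring.edge_inj i hi j hj h) hij
    · exact ⟨i, hi, h⟩
    · exact ⟨j, hj, h⟩
  have hreach : ∀ r, EdgeJoined ends S (v' 0) r → ∃ i < k + 1, v' i = r := by
    intro r hr
    induction hr with
    | refl => exact ⟨0, by omega, rfl⟩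
    | @tail b c _ hbc ih =>
      obtain ⟨i, hi, rfl⟩ := ih
      obtain ⟨z, hz, hze⟩ := hbc
      obtain ⟨t, ht, rfl⟩ := hat i hi z hz (by rw [hze]; exact Sym2.mem_mk_left _ _)
      have hc : c ∈ ends (a' t) := by rw [hze]; exact Sym2.mem_mk_right _ _
      rw [hring.ends_eq t ht, Sym2.mem_iff] at hc
      rcases hc with rfl | rfl
      · exact ⟨t, ht, rfl⟩
      · rcases Nat.lt_or_ge (t + 1) (k + 1) with ht' | ht'
        · exact ⟨t + 1, ht', rfl⟩
        · exact ⟨0, by omega, by rw [← hring.closed]; congr 1; omega⟩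
  have hm := (ends x).out_fst_mem
  obtain ⟨i, hi, h⟩ := hreach _ (hconn (v' 0) _ ⟨a' 0, hS 0 (by omega), by
    rw [hring.ends_eq 0 (by omega)]; exact Sym2.mem_mk_left _ _⟩ ⟨x, hx, hm⟩)
  exact hat i hi x hx (by rw [h]; exact hm)


open Classical in
/-- A nowhere-zero flow on the graph obtained by contracting a ring extends to the whole graph. -/
theorem IsRing.exists_isGoodFlow_of_quot {V E : Type*} [Fintype E] {ends : E → Sym2 V} {N : ℕ}
    {v : ℕ → V} {a : ℕ → E} (h : IsRing ends N v a) {S : Set E}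
    (hS : ∀ x, x ∈ S ↔ ∃ t < N, a t = x) [Fintype {x // x ∉ S}]
    (g : {x // x ∉ S} → ZMod 2 × ZMod 2) (hg : ∀ x, g x ≠ 0)
    (hflow : ∀ w : Quot fun u w : V => ∃ x ∈ S, ends x = s(u, w),
      ∑ x, ((ends x.1).map (Quot.mk _)).bd w • g x = 0) :
    ∃ f, IsGoodFlow ends N a f := by
  have hnot : ∀ x, x ∉ S ↔ ∀ t < N, a t ≠ x := fun x => by rw [hS]; push Not; rfl
  have hvtx : ∀ t ≤ N, ∃ s < N, v s = v t := by
    intro t ht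
    rcases ht.lt_or_eq with ht | rfl
    · exact ⟨t, ht, rfl⟩
    · exact ⟨0, h.pos, h.closed.symm⟩
  have hends : ∀ x ∈ S, ∀ p r, ends x = s(p, r) → ∃ t < N, v t = p := by
    intro x hx p r hxe
    obtain ⟨t, ht, rfl⟩ := (hS x).1 hx
    rw [h.ends_eq t ht, Sym2.eq_iff] at hxe
    rcases hxe with ⟨rfl, -⟩ | ⟨-, rfl⟩
    · exact ⟨t, ht, rfl⟩
    · exact hvtx _ ht
  let L : (Quot fun u w : V => ∃ x ∈ S, ends x = s(u, w)) → Option V :=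
    Quot.lift (fun u => if ∃ t < N, v t = u then none else some u) (by
      rintro p r ⟨x, hx, hxe⟩
      rw [if_pos (hends x hx p r hxe), if_pos (hends x hx r p (hxe.trans Sym2.eq_swap))])
  have hmk : ∀ t ≤ N, (Quot.mk (fun u w : V => ∃ x ∈ S, ends x = s(u, w)) (v t)) =
      Quot.mk _ (v 0) := by
    intro t ht
    induction t with
    | zero => rfl
    | succ t ih =>
      rw [← ih (by omega)]
      exact (Quot.sound ⟨a t, (hS _).2 ⟨t, by omega, rfl⟩, h.ends_eq t (by omega)⟩).symm
  have hon : ∀ u, (Quot.mk (fun u w : V => ∃ x ∈ S, ends x = s(u, w)) u) = Quot.mk _ (v 0) ↔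
      ∃ t < N, v t = u := by
    refine fun u => ⟨fun hu => ?_, ?_⟩
    · by_contra hn
      have := congrArg L hu
      simp only [L, if_neg hn, if_pos (⟨0, h.pos, rfl⟩ : ∃ t < N, v t = v 0)] at this
      cases this
    · rintro ⟨t, ht, rfl⟩
      exact hmk t ht.le
  have hoff : ∀ w, (∀ t < N, v t ≠ w) → ∀ u,
      (Quot.mk (fun u w : V => ∃ x ∈ S, ends x = s(u, w)) u) = Quot.mk _ w ↔ u = w := by
    refine fun w hw u => ⟨fun hu => ?_, fun hu => by rw [hu]⟩
    have := congrArg L hu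
    simp only [L, if_neg (show ¬ ∃ t < N, v t = w by push Not; exact hw)] at this
    split_ifs at this
    exact Option.some_injective _ this
  have hsum : ∀ F : E → ZMod 2, ∑ x with ∀ t < N, a t ≠ x, F x •
      (if hx : x ∉ S then g ⟨x, hx⟩ else 0) = ∑ x : {x // x ∉ S}, F x.1 • g x := by
    intro F
    rw [Finset.sum_subtype (p := fun x => x ∉ S) _ (by simp [hnot])]
    exact Finset.sum_congr rfl fun x _ => by rw [dif_pos x.2]
  refine h.exists_isGoodFlow (fun x => if hx : x ∉ S then g ⟨x, hx⟩ else 0) (fun x hx => ?_)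
    (fun w hw => ?_) ?_
  · rw [dif_pos ((hnot x).2 hx)]
    exact hg _
  · rw [hsum, ← hflow (Quot.mk _ w)]
    refine Finset.sum_congr rfl fun x _ => ?_
    congr 1
    induction ends x.1 with
    | _ p r => simp only [Sym2.map_mk, Sym2.bd_mk, hoff w hw]
  · simp only [hsum]
    rw [Finset.sum_comm, ← hflow (Quot.mk _ (v 0))]
    refine Finset.sum_congr rfl fun x _ => ?_
    rw [← Finset.sum_smul]
    congr 1
    have hind : ∀ u, ∑ t ∈ Finset.range N, (if u = v t then (1 : ZMod 2) else 0) =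
        if ∃ t < N, v t = u then 1 else 0 := by
      intro u
      split_ifs with hu
      · obtain ⟨s, hs, rfl⟩ := hu
        rw [Finset.sum_eq_single s, if_pos rfl]
        · exact fun t ht hts => if_neg fun hv =>
            hts (h.vtx_inj _ (Finset.mem_range.1 ht) _ hs hv.symm)
        · exact fun hs' => absurd (Finset.mem_range.2 hs) hs'
      · push Not at hu
        exact Finset.sum_eq_zero fun t ht => if_neg (hu t (Finset.mem_range.1 ht)).symm
    induction ends x.1 with
    | _ p r => simp only [Sym2.map_mk, Sym2.bd_mk, Finset.sum_add_distrib, hind, hon]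

end Circuit

section Main

open Multigraph

theorem Multigraph.IsCircuit.exists_isRing {G : Multigraph} {C : Set G.E} (hC : G.IsCircuit C) :
    ∃ N v a, IsRing G.ends N v a ∧ ∀ x, x ∈ C ↔ ∃ t < N, a t = x := by
  obtain ⟨hne, hdeg, hconn⟩ := hC
  have hone : ∀ p, ∀ x ∈ C, ∀ y ∈ C, G.ends x = s(p, p) → p ∈ G.ends y → y = x := by
    intro p x hx y hy hxp hyp
    have h := hdeg p ⟨y, hy, hyp⟩
    have h1 : 0 < Nat.card {e : G.E // e ∈ C ∧ G.ends e = s(p, p)} :=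
      Nat.card_pos_iff.2 ⟨⟨⟨x, hx, hxp⟩⟩, inferInstance⟩
    unfold degIn at h
    by_cases hd : (G.ends y).IsDiag
    · have h2 : Nat.card {e : G.E // e ∈ C ∧ G.ends e = s(p, p)} = 1 := by omega
      have := (Nat.card_eq_one_iff_unique.1 h2).1
      have hyp' : G.ends y = s(p, p) := by
        obtain ⟨r, hr⟩ := Sym2.mem_iff_exists.1 hyp
        rw [hr] at hd ⊢
        rw [← Sym2.mk_isDiag_iff.1 hd]
      exact congrArg Subtype.val (Subsingleton.elim
        (⟨y, hy, hyp'⟩ : {e : G.E // e ∈ C ∧ G.ends e = s(p, p)}) ⟨x, hx, hxp⟩)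
    · have : 0 < Nat.card {e : G.E // e ∈ C ∧ p ∈ G.ends e ∧ ¬ (G.ends e).IsDiag} :=
        Nat.card_pos_iff.2 ⟨⟨⟨y, hy, hyp, hd⟩⟩, inferInstance⟩
      omega
  have huniq : ∀ p, ∀ x ∈ C, p ∈ G.ends x → ∀ hd : ¬ (G.ends x).IsDiag,
      ∃! y : {e : G.E // e ∈ C ∧ p ∈ G.ends e ∧ ¬ (G.ends e).IsDiag}, y.1 ≠ x := by
    intro p x hx hxp hd
    have h := hdeg p ⟨x, hx, hxp⟩
    unfold degIn at h
    have : 0 < Nat.card {e : G.E // e ∈ C ∧ p ∈ G.ends e ∧ ¬ (G.ends e).IsDiag} :=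
      Nat.card_pos_iff.2 ⟨⟨⟨x, hx, hxp, hd⟩⟩, inferInstance⟩
    have h2 : Nat.card {e : G.E // e ∈ C ∧ p ∈ G.ends e ∧ ¬ (G.ends e).IsDiag} = 2 := by omega
    simpa [Subtype.ext_iff] using (Nat.card_eq_two_iff' ⟨x, hx, hxp, hd⟩).1 h2
  refine _root_.exists_isRing hne ?_ ?_ hone hconn
  · intro p x hx y hy z hz hxp hyp hzp
    have hloop : ∀ x ∈ C, p ∈ G.ends x → (G.ends x).IsDiag → G.ends x = s(p, p) := by
      intro x _ hxp hd
      obtain ⟨r, hr⟩ := Sym2.mem_iff_exists.1 hxp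
      rw [hr] at hd ⊢
      rw [← Sym2.mk_isDiag_iff.1 hd]
    by_cases hdx : (G.ends x).IsDiag
    · exact Or.inl (hone p x hx y hy (hloop x hx hxp hdx) hyp).symm
    by_cases hdy : (G.ends y).IsDiag
    · exact Or.inl (hone p y hy x hx (hloop y hy hyp hdy) hxp)
    by_cases hdz : (G.ends z).IsDiag
    · exact Or.inr (Or.inl (hone p z hz x hx (hloop z hz hzp hdz) hxp))
    by_contra! hn
    exact hn.2.2 (congrArg Subtype.val ((huniq p x hx hxp hdx).unique
      (y₁ := ⟨y, hy, hyp, hdy⟩) (y₂ := ⟨z, hz, hzp, hdz⟩) hn.1.symm hn.2.1.symm))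
  · intro p x hx hxp hd
    obtain ⟨⟨y, hy, hyp, hyd⟩, hyx, -⟩ := huniq p x hx hxp hd
    exact ⟨y, hy, hyx, hyp, hyd⟩

end Main

open Multigraph in
/-- Corollary 2.2, Fan's conjecture.  If `C` is a circuit of
`G` and `G/C` admits a nowhere-zero `4`-flow, then `G` admits a `4`-flow `f`
with `E(G) − E(C) ⊆ supp f` and `|E_{f=0}(C)| < |E(C)|/4`. -/
theorem circuit_contract_four_flow (G : Multigraph) (C : Set G.E)
    (hC : G.IsCircuit C)
    (hnz : ∃ (D' : (G.contract C).E → (G.contract C).V × (G.contract C).V)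
      (f' : (G.contract C).E → ℤ),
      (G.contract C).IsIntFlow 4 D' f' ∧ ∀ e, f' e ≠ 0) :
    ∃ (D : G.E → G.V × G.V) (f : G.E → ℤ),
      G.IsIntFlow 4 D f ∧
      (∀ e : G.E, e ∉ C → f e ≠ 0) ∧
      ({e ∈ C | f e = 0}.ncard : ℝ) < (1 / 4) * (C.ncard : ℝ) := by
  classical
  have : Fintype G.V := Fintype.ofFinite _
  have : Fintype G.E := Fintype.ofFinite _
  have hfin : Fintype (G.contract C).E := Fintype.ofFinite _
  obtain ⟨N, v, a, hring, hmem⟩ := hC.exists_isRing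
  obtain ⟨D', f', ⟨hD', hf', hv'⟩, h0⟩ := hnz
  obtain ⟨g, hg0, hg⟩ := exists_klein_flow_of_int_flow D' f' hf' h0 fun w =>
    (finsum_mem_eq_iff_sum_mul_eq_zero D' f' w).1 (hv' w)
  simp only [hD'] at hg
  obtain ⟨f, hf, hcard⟩ := hring.exists_isGoodFlow_card_lt
    (@IsRing.exists_isGoodFlow_of_quot _ _ _ _ _ _ _ hring C hmem hfin g hg0 hg)
  have hD : ∀ e, s((Quot.out (G.ends e)).1, (Quot.out (G.ends e)).2) = G.ends e := fun e =>
    Quot.out_eq _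
  obtain ⟨k, hk, hk0, hkv⟩ := exists_int_flow_of_klein_flow (fun e => Quot.out (G.ends e)) f
    (fun w => by simp only [hD]; exact hf.1 w)
  refine ⟨_, k, ⟨hD, hk, fun w => (finsum_mem_eq_iff_sum_mul_eq_zero _ k w).2 (hkv w)⟩,
    fun e he h => ?_, ?_⟩
  · exact hf.2 e (fun t ht hte => he ((hmem e).2 ⟨t, ht, hte⟩)) ((hk0 e).1 h)
  · have hinj : Set.InjOn a (Finset.range N) := fun i hi j hj hij =>
      hring.edge_inj i (by simpa using hi) j (by simpa using hj) hij
    have h1 : C = ((Finset.range N).image a : Finset G.E) := by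
      ext x
      simp [hmem]
    have h2 : {e ∈ C | k e = 0} =
        (((Finset.range N).filter fun t => f (a t) = 0).image a : Finset G.E) := by
      ext x
      simp only [Set.mem_ofPred_eq, hmem, hk0, Finset.coe_image, Set.mem_image, Finset.mem_coe,
        Finset.mem_filter, Finset.mem_range]
      constructor
      · rintro ⟨⟨t, ht, rfl⟩, h⟩
        exact ⟨t, ⟨ht, h⟩, rfl⟩
      · rintro ⟨t, ⟨ht, h⟩, rfl⟩
        exact ⟨⟨t, ht, rfl⟩, h⟩
    have h3 : C.ncard = N := by
      rw [h1, Set.ncard_coe_finset, Finset.card_image_of_injOn hinj, Finset.card_range]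
    have h4 : {e ∈ C | k e = 0}.ncard = ((Finset.range N).filter fun t => f (a t) = 0).card := by
      rw [h2, Set.ncard_coe_finset, Finset.card_image_of_injOn
        (hinj.mono (Finset.coe_subset.2 (Finset.filter_subset _ _)))]
    rw [h3, h4]
    have : (4 : ℝ) * ((Finset.range N).filter fun t => f (a t) = 0).card < N := by
      exact_mod_cast hcard
    linarith
end
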